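/- arXiv:math/0409586 — 2 statements merged into one kernel-verified Lean document; each statement's English description precedes it below -/
import Mathlib

section
/- Common image claim for three disks glued along an arc: Let A ⊆ S¹ be a closed arc with nonempty interior, and let q be a point in the interior of A. Let F₁, F₂, F₃ : D² → S² be continuous maps which all agree on A (F₁|_A = F₂|_A = F₃|_A), and suppose that for each i ∈ {1,2,3}, every point a in the interior of A is an injective point of the restriction Gᵢ := Fᵢ|_{S¹} (i.e. Gᵢ⁻¹({Gᵢ(a)}) = {a}). Set p := F₁(q). Then there exist indices i ≠ j in {1,2,3} and a connected open set W ⊆ S² such that p lies in the closure of W and W ⊆ Fᵢ(D²) ∩ F_j(D²). -/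
open Metric Set

noncomputable section

/-- The unit circle in the Euclidean plane. -/
def circleS : Set (EuclideanSpace ℝ (Fin 2)) := Metric.sphere 0 1

/-- The closed unit disk in the Euclidean plane. -/
def diskS : Set (EuclideanSpace ℝ (Fin 2)) := Metric.closedBall 0 1

/-- The unit sphere in Euclidean 3-space. -/
def sphereS : Set (EuclideanSpace ℝ (Fin 3)) := Metric.sphere 0 1

/-- `A` is a closed arc in the circle: the image of a topological embedding of a (nondegenerate)
closed interval.  (A continuous injection of a compact interval into the Hausdorff space `ℝ²`
is automatically an embedding onto its image.) -/
def IsClosedArc (A : Set (EuclideanSpace ℝ (Fin 2))) : Prop :=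
  A ⊆ circleS ∧ ∃ (a b : ℝ) (φ : ℝ → EuclideanSpace ℝ (Fin 2)), a < b ∧
    ContinuousOn φ (Icc a b) ∧ InjOn φ (Icc a b) ∧ φ '' Icc a b = A

/-- The interior of `A` relative to the circle. -/
def circleInterior (A : Set (EuclideanSpace ℝ (Fin 2))) : Set (EuclideanSpace ℝ (Fin 2)) :=
  {x | x ∈ A ∧ ∃ V, IsOpen V ∧ x ∈ V ∧ V ∩ circleS ⊆ A}


open unitInterval in
lemma cx_lift_on {A : Type*} [TopologicalSpace A] (S : Set A) (h : I → A → ℂ)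
    (hc : ContinuousOn (Function.uncurry h) (univ ×ˢ S))
    (h0 : ∀ u, ∀ a ∈ S, h u a ≠ 0) (f0 : A → ℂ) (hf0 : ContinuousOn f0 S)
    (hs : ∀ a ∈ S, h 0 a = Complex.exp (f0 a)) :
    ∃ H : I → A → ℂ, ContinuousOn (Function.uncurry H) (univ ×ˢ S) ∧
      (∀ u, ∀ a ∈ S, Complex.exp (H u a) = h u a) ∧ ∀ a ∈ S, H 0 a = f0 a := by
  classical
  have hc' : Continuous (fun q : I × S => (⟨h q.1 q.2, h0 _ _ q.2.2⟩ : {z : ℂ // z ≠ 0})) := by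
    refine Continuous.subtype_mk ?_ _
    exact hc.comp_continuous (f := fun q : I × S => (q.1, (q.2 : A))) (by fun_prop)
      (fun q => ⟨mem_univ _, q.2.2⟩)
  let Hm : C(I × S, {z : ℂ // z ≠ 0}) := ⟨_, hc'⟩
  let f0m : C(S, ℂ) := ⟨fun a => f0 a, hf0.domRestrict⟩
  have H0 : ∀ a, Hm (0, a) = (⟨_, (f0m a).exp_ne_zero⟩ : {z : ℂ // z ≠ 0}) := by
    intro a; exact Subtype.ext (hs a a.2)
  let L := Complex.isCoveringMap_exp.liftHomotopy Hm f0m H0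
  refine ⟨fun u a => if ha : a ∈ S then L (u, ⟨a, ha⟩) else 0, ?_, ?_, ?_⟩
  · rw [continuousOn_iff_continuous_domRestrict]
    have : Continuous (fun q : (univ ×ˢ S : Set (I × A)) => L (q.1.1, ⟨q.1.2, q.2.2⟩)) := by
      refine L.continuous.comp ?_
      refine Continuous.prodMk (by fun_prop) (Continuous.subtype_mk (by fun_prop) _)
    convert this using 1
    ext q
    simp [Function.uncurry, q.2.2]
  · intro u a ha
    have := congr_fun (Complex.isCoveringMap_exp.liftHomotopy_lifts Hm f0m H0) (u, ⟨a, ha⟩)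
    simp only [ha, dite_true]
    exact congrArg Subtype.val this
  · intro a ha
    have := Complex.isCoveringMap_exp.liftHomotopy_zero Hm f0m H0 ⟨a, ha⟩
    simp only [ha, dite_true]
    exact this

lemma cx_const {A : Type*} [TopologicalSpace A] [PreconnectedSpace A] (D : A → ℂ)
    (hD : Continuous D) (he : ∀ a b, Complex.exp (D a) = Complex.exp (D b)) (a b : A) :
    D a = D b := by
  exact Complex.isCoveringMap_exp.isSeparatedMap.const_of_comp
    Complex.isCoveringMap_exp.isLocalHomeomorph.isLocallyInjective hD
    (fun a b => Subtype.ext (he a b)) a b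

open unitInterval in
/-- logs on star-shaped (at zero) sets -/
lemma cx_log_plane (h : ℂ → ℂ) (hc : Continuous h) (h0 : ∀ z, h z ≠ 0) :
    ∃ H : ℂ → ℂ, Continuous H ∧ ∀ z, Complex.exp (H z) = h z := by
  obtain ⟨H, H1, H2, -⟩ := cx_lift_on (A := ℂ) univ (fun u z => h ((u : ℝ) * z))
    (by apply Continuous.continuousOn; simp only [Function.uncurry_def]; fun_prop)
    (fun _ _ _ => h0 _) (fun _ => Complex.log (h 0)) (by fun_prop)
    (fun a _ => by simp [Complex.exp_log (h0 0)])
  refine ⟨H 1, ?_, fun z => by simpa using H2 1 z (mem_univ _)⟩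
  rw [univ_prod_univ, continuousOn_univ] at H1
  exact H1.comp (f := fun z => ((1 : I), z)) (by fun_prop)

open unitInterval in
lemma cx_degree (h : ℂ → ℂ) (hc : Continuous h) (h0 : ∀ z, h z ≠ 0) (x : ℂ) (R : ℝ) (n : ℤ)
    (hR : ∀ z, R ≤ ‖z‖ → h z = (z - x) ^ n) : n = 0 := by
  obtain ⟨H, Hc, He⟩ := cx_log_plane h hc h0
  set r : ℝ := |R| + ‖x‖ + 1 with hr
  have hr0 : 0 < r := by positivity
  have key := cx_const (A := ℝ) (fun t => H (x + r * Complex.exp (t * Complex.I)) -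
      n * (t * Complex.I)) (by fun_prop) (by
    have : ∀ t : ℝ, Complex.exp (H (x + r * Complex.exp (t * Complex.I)) -
      n * (t * Complex.I)) = r ^ n := by
      intro t
      rw [Complex.exp_sub, He, hR, Complex.exp_int_mul]
      · rw [add_sub_cancel_left, mul_zpow, mul_div_cancel_right₀]
        exact zpow_ne_zero _ (Complex.exp_ne_zero _)
      · have h1 : ‖(r : ℂ) * Complex.exp (t * Complex.I)‖ = r := by
          simp [Complex.norm_exp_ofReal_mul_I, abs_of_pos hr0]
        have h2 := norm_sub_le (x + r * Complex.exp (t * Complex.I)) x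
        rw [add_sub_cancel_left, h1] at h2
        have := le_abs_self R
        linarith
    intro a b; rw [this, this]) 0 (2 * Real.pi)
  simp only [Complex.ofReal_zero, zero_mul, Complex.exp_zero, Complex.ofReal_mul,
    Complex.ofReal_ofNat, Complex.exp_two_pi_mul_I, mul_zero] at key
  have : (n : ℂ) * (2 * Real.pi * Complex.I) = 0 := by linear_combination key
  have h2 := Complex.two_pi_I_ne_zero
  simpa [h2] using this

lemma cx_borsuk (X U : Set ℂ) (hX : IsClosed X) (R : ℝ) (hXR : ∀ z, R ≤ ‖z‖ → z ∈ X)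
    (hUo : IsOpen U) (hUX : Disjoint U X) (hUc : closure U ⊆ U ∪ X) (x : ℂ) (hx : x ∈ U) (n : ℤ)
    (r g : ℂ → ℂ) (hr : ContinuousOn r (U ∪ X)) (hr0 : ∀ z ∈ U ∪ X, r z ≠ 0)
    (hg : ContinuousOn g X) (hgr : ∀ z ∈ X, Complex.exp (g z) = (z - x) ^ n * r z) : n = 0 := by
  classical
  obtain ⟨G, hG⟩ := ContinuousMap.exists_restrict_eq hX (⟨X.domRestrict g, hg.domRestrict⟩ : C(X, ℂ))
  have hG' : ∀ z ∈ X, G z = g z := fun z hz => by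
    have := DFunLike.congr_fun hG ⟨z, hz⟩
    exact this
  let h : ℂ → ℂ := fun z => if z ∈ U then Complex.exp (G z) / r z else (z - x) ^ n
  have e1 : EqOn h (fun z => Complex.exp (G z) / r z) (closure U) := by
    intro z hz
    by_cases hzU : z ∈ U
    · simp [h, hzU]
    · have hzX : z ∈ X := (hUc hz).resolve_left hzU
      simp only [h, hzU, if_false]
      rw [hG' z hzX, hgr z hzX, mul_div_cancel_right₀ _ (hr0 z (Or.inr hzX))]
  have e2 : EqOn h (fun z => (z - x) ^ n) Uᶜ := by
    intro z hz; simp only [h]; rw [if_neg hz]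
  have c1 : ContinuousOn h (closure U) := by
    refine ContinuousOn.congr ?_ e1
    exact (Complex.continuous_exp.comp G.continuous).continuousOn.div (hr.mono hUc)
      (fun z hz => hr0 z (hUc hz))
  have c2 : ContinuousOn h Uᶜ := by
    refine ContinuousOn.congr ?_ e2
    refine ContinuousOn.zpow₀ (by fun_prop) n ?_
    intro z hz
    left
    rw [sub_ne_zero]; rintro rfl; exact hz hx
  have c3 := c1.union_of_isClosed c2 isClosed_closure hUo.isClosed_compl
  have : closure U ∪ Uᶜ = univ := by
    apply eq_univ_of_forall; intro z
    by_cases hz : z ∈ U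
    · exact Or.inl (subset_closure hz)
    · exact Or.inr hz
  rw [this, continuousOn_univ] at c3
  refine cx_degree h c3 ?_ x R n ?_
  · intro z
    by_cases hz : z ∈ U
    · simp only [h, hz, if_true]
      exact div_ne_zero (Complex.exp_ne_zero _) (hr0 z (Or.inl hz))
    · rw [e2 hz]
      refine zpow_ne_zero _ ?_
      rw [sub_ne_zero]; rintro rfl; exact hz hx
  · intro z hz
    exact e2 (fun hzU => hUX.ne_of_mem hzU (hXR z hz) rfl)

lemma cx_comp_closure (X : Set ℂ) (hX : IsClosed X) (x : ℂ) :
    IsOpen (connectedComponentIn Xᶜ x) ∧ Disjoint (connectedComponentIn Xᶜ x) X ∧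
    closure (connectedComponentIn Xᶜ x) ⊆ connectedComponentIn Xᶜ x ∪ X := by
  refine ⟨hX.isOpen_compl.connectedComponentIn, ?_, ?_⟩
  · exact Set.subset_compl_iff_disjoint_right.1 (connectedComponentIn_subset _ _)
  · intro z hz
    by_cases hzX : z ∈ X
    · exact Or.inr hzX
    left
    have ho : IsOpen (connectedComponentIn Xᶜ z) := hX.isOpen_compl.connectedComponentIn
    obtain ⟨w, hw1, hw2⟩ := mem_closure_iff.1 hz _ ho (mem_connectedComponentIn hzX)
    rw [connectedComponentIn_eq hw2, ← connectedComponentIn_eq hw1]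
    exact mem_connectedComponentIn hzX


open unitInterval in
/-- A planar arc through `0`, together with a closed set `K` away from `0` which meets the arc
only in its end points, and continuous logarithms along the arc. -/
structure PArc where
  γ : I → ℂ
  hγ : Continuous γ
  inj : Function.Injective γ
  m : I
  hm : γ m = 0
  K : Set ℂ
  hK : IsClosed K
  R : ℝ
  hR : ∀ z, R ≤ ‖z‖ → z ∈ K
  δ : ℝ
  hδ : 0 < δ
  hKδ : ∀ k ∈ K, δ ≤ ‖k‖
  h0 : γ 0 ∈ K
  h1 : γ 1 ∈ K
  hmeetK : ∀ u, γ u ∈ K → u = 0 ∨ u = 1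
  E : I → ℂ → ℂ
  hE : ContinuousOn (Function.uncurry E) (univ ×ˢ (range γ)ᶜ)
  hEe : ∀ u, ∀ x ∈ (range γ)ᶜ, Complex.exp (E u x) = (γ u - x) / (γ 0 - x)
  hE0 : ∀ x ∈ (range γ)ᶜ, E 0 x = 0

def ell (x k : ℂ) : ℂ := Complex.log (1 - x / k)

lemma ell_mem {x k : ℂ} {δ : ℝ} (hx : ‖x‖ < δ) (hk : δ ≤ ‖k‖) : 1 - x / k ∈ Complex.slitPlane := by
  rw [sub_eq_add_neg]
  apply Complex.mem_slitPlane_of_norm_lt_one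
  rw [norm_neg, norm_div, div_lt_one]
  · linarith
  · linarith [norm_nonneg x]

lemma ell_exp {x k : ℂ} {δ : ℝ} (hx : ‖x‖ < δ) (hk : δ ≤ ‖k‖) :
    Complex.exp (ell x k) = (k - x) / k := by
  have hk0 : k ≠ 0 := by
    rintro rfl; rw [norm_zero] at hk; linarith [norm_nonneg x]
  rw [ell, Complex.exp_log (Complex.slitPlane_ne_zero (ell_mem hx hk))]
  field_simp

lemma ell_cont_left {k : ℂ} {δ : ℝ} (hk : δ ≤ ‖k‖) :
    ContinuousOn (fun x => ell x k) (ball 0 δ) := by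
  refine ContinuousOn.clog (by fun_prop) ?_
  intro x hx
  exact ell_mem (by simpa using hx) hk

lemma ell_cont_right {x : ℂ} {δ : ℝ} (hx : ‖x‖ < δ) (K : Set ℂ) (hK : ∀ k ∈ K, δ ≤ ‖k‖) :
    ContinuousOn (fun k => ell x k) K := by
  refine ContinuousOn.clog ?_ ?_
  · refine continuousOn_const.sub (continuousOn_const.div continuousOn_id ?_)
    intro k hk h
    have := hK k hk
    rw [show k = 0 from h, norm_zero] at this; linarith [norm_nonneg x]
  · intro k hk
    exact ell_mem hx (hK k hk)

namespace PArc

variable (P : PArc)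

def X : Set ℂ := range P.γ ∪ P.K

def J (x : ℂ) : ℂ := P.E 1 x - (ell x (P.γ 1) - ell x (P.γ 0))

lemma isClosed_range : IsClosed (range P.γ) := (isCompact_range P.hγ).isClosed

lemma isClosed_X : IsClosed P.X := P.isClosed_range.union P.hK

lemma a0 : P.γ 0 ≠ 0 := fun h => by
  have := P.hKδ _ P.h0; rw [h, norm_zero] at this; linarith [P.hδ]

lemma b0 : P.γ 1 ≠ 0 := fun h => by
  have := P.hKδ _ P.h1; rw [h, norm_zero] at this; linarith [P.hδ]

lemma sub_ne {x : ℂ} (hx : x ∉ range P.γ) (u) : P.γ u - x ≠ 0 := fun h =>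
  hx ⟨u, by linear_combination h⟩

lemma J_exp {x : ℂ} (hx : ‖x‖ < P.δ) (hxr : x ∉ range P.γ) :
    Complex.exp (P.J x) = P.γ 1 / P.γ 0 := by
  have h1 := P.sub_ne hxr 1
  have h0 := P.sub_ne hxr 0
  have a0 := P.a0
  have b0 := P.b0
  rw [J, Complex.exp_sub, Complex.exp_sub, P.hEe _ _ hxr, ell_exp hx (P.hKδ _ P.h1),
    ell_exp hx (P.hKδ _ P.h0)]
  field_simp

lemma notMem_X {x : ℂ} (hx : ‖x‖ < P.δ) (hxr : x ∉ range P.γ) : x ∉ P.X := by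
  rintro (h | h)
  · exact hxr h
  · linarith [P.hKδ _ h]

/-- logarithm on `X` -/
lemma log_X (S : Finset ℂ) (n : ℂ → ℤ) (hS : ∀ x ∈ S, ‖x‖ < P.δ ∧ x ∉ range P.γ)
    (hn : ∑ x ∈ S, n x = 0) (hJ : ∑ x ∈ S, (n x : ℂ) * P.J x = 0) :
    ∃ g : ℂ → ℂ, ContinuousOn g P.X ∧
      ∀ w ∈ P.X, Complex.exp (g w) = ∏ x ∈ S, (w - x) ^ (n x) := by
  classical
  let inv := Function.invFun P.γ
  have hinv : ∀ u, inv (P.γ u) = u := Function.leftInverse_invFun P.inj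
  have hinvc : ContinuousOn inv (range P.γ) := by
    have hemb := (P.hγ.isClosedEmbedding P.inj).isEmbedding
    rw [hemb.isInducing.continuousOn_iff]
    refine continuousOn_id.congr ?_
    rintro _ ⟨u, rfl⟩
    simp [hinv]
  let g1 : ℂ → ℂ := fun w => ∑ x ∈ S, (n x : ℂ) * ell x w
  let g2 : ℂ → ℂ := fun w => ∑ x ∈ S, (n x : ℂ) * (P.E (inv w) x + ell x (P.γ 0))
  have hprod : ∀ w : ℂ, w ≠ 0 → ∏ x ∈ S, ((w - x) / w) ^ (n x) = ∏ x ∈ S, (w - x) ^ (n x) := by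
    intro w hw
    simp_rw [div_zpow]
    rw [Finset.prod_div_distrib]
    have : ∏ x ∈ S, w ^ (n x) = w ^ (∑ x ∈ S, n x) := by
      clear hS hn hJ g1 g2
      induction S using Finset.induction_on with
      | empty => simp
      | insert a s ha ih => rw [Finset.prod_insert ha, Finset.sum_insert ha, zpow_add₀ hw, ih]
    rw [this, hn]; simp
  have e1 : ∀ w ∈ P.K, Complex.exp (g1 w) = ∏ x ∈ S, (w - x) ^ (n x) := by
    intro w hw
    have hw0 : w ≠ 0 := by
      rintro rfl
      have := P.hKδ _ hw; rw [norm_zero] at this; linarith [P.hδ]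
    rw [← hprod w hw0]
    simp only [g1]
    rw [Complex.exp_sum]
    refine Finset.prod_congr rfl fun x hx => ?_
    rw [Complex.exp_int_mul, ell_exp (hS x hx).1 (P.hKδ _ hw)]
  have e2 : ∀ w ∈ range P.γ, Complex.exp (g2 w) = ∏ x ∈ S, (w - x) ^ (n x) := by
    rintro _ ⟨u, rfl⟩
    simp only [g2, hinv]
    have hz : ∏ x ∈ S, (P.γ 0) ^ (n x) = 1 := by
      have h1 := hprod (P.γ 0) P.a0
      simp_rw [div_zpow] at h1
      rw [Finset.prod_div_distrib] at h1
      have h2 : ∏ x ∈ S, (P.γ 0 - x) ^ (n x) ≠ 0 :=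
        Finset.prod_ne_zero_iff.2 fun x hx => zpow_ne_zero _ (P.sub_ne (hS x hx).2 0)
      have h3 : ∏ x ∈ S, (P.γ 0) ^ (n x) ≠ 0 :=
        Finset.prod_ne_zero_iff.2 fun x hx => zpow_ne_zero _ P.a0
      rw [div_eq_iff h3] at h1
      exact (mul_left_cancel₀ h2 (by rw [← h1, mul_one])).symm
    have : ∏ x ∈ S, (P.γ u - x) ^ (n x) =
        ∏ x ∈ S, ((P.γ u - x) / P.γ 0) ^ (n x) := by
      simp_rw [div_zpow]
      rw [Finset.prod_div_distrib, hz, div_one]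
    rw [this, Complex.exp_sum]
    refine Finset.prod_congr rfl fun x hx => ?_
    rw [Complex.exp_int_mul, Complex.exp_add, P.hEe _ _ (hS x hx).2,
      ell_exp (hS x hx).1 (P.hKδ _ P.h0), div_mul_div_cancel₀ (P.sub_ne (hS x hx).2 0)]
  have agree : ∀ w ∈ P.K, w ∈ range P.γ → g1 w = g2 w := by
    rintro _ hw ⟨u, rfl⟩
    rcases P.hmeetK u hw with rfl | rfl
    · simp only [g1, g2, hinv]
      refine Finset.sum_congr rfl fun x hx => ?_
      rw [P.hE0 _ (hS x hx).2, zero_add]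
    · simp only [g1, g2, hinv]
      rw [eq_comm, ← sub_eq_zero, ← Finset.sum_sub_distrib, ← hJ]
      refine Finset.sum_congr rfl fun x hx => ?_
      rw [J]; ring
  have c1 : ContinuousOn g1 P.K := by
    refine continuousOn_finsetSum _ fun x hx => continuousOn_const.mul ?_
    exact ell_cont_right (hS x hx).1 _ P.hKδ
  have c2 : ContinuousOn g2 (range P.γ) := by
    refine continuousOn_finsetSum _ fun x hx => continuousOn_const.mul (ContinuousOn.add ?_
      continuousOn_const)
    exact P.hE.comp (hinvc.prodMk continuousOn_const) (fun w _ => ⟨mem_univ _, (hS x hx).2⟩)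
  let g : ℂ → ℂ := fun w => if w ∈ range P.γ then g2 w else g1 w
  have q2 : EqOn g g2 (range P.γ) := fun w hw => if_pos hw
  have q1 : EqOn g g1 P.K := by
    intro w hw
    by_cases h : w ∈ range P.γ
    · rw [q2 h, agree w hw h]
    · exact if_neg h
  refine ⟨g, (c2.congr q2).union_of_isClosed (c1.congr q1) P.isClosed_range P.hK, ?_⟩
  rintro w (hw | hw)
  · rw [q2 hw, e2 w hw]
  · rw [q1 hw, e1 w hw]

def comp (x : ℂ) : Set ℂ := connectedComponentIn P.Xᶜ x

lemma exponent_zero (S : Finset ℂ) (n : ℂ → ℤ) (hS : ∀ x ∈ S, ‖x‖ < P.δ ∧ x ∉ range P.γ)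
    (hn : ∑ x ∈ S, n x = 0) (hJ : ∑ x ∈ S, (n x : ℂ) * P.J x = 0)
    (x : ℂ) (hx : x ∈ S) (hd : ∀ y ∈ S, y ≠ x → y ∉ P.comp x) : n x = 0 := by
  classical
  obtain ⟨g, hg, hge⟩ := P.log_X S n hS hn hJ
  obtain ⟨o1, o2, o3⟩ := cx_comp_closure P.X P.isClosed_X x
  have hne : ∀ z ∈ P.comp x ∪ P.X, ∀ y ∈ S.erase x, z - y ≠ 0 := by
    intro z hz y hy h
    have hy' := Finset.mem_erase.1 hy
    have : z = y := by linear_combination h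
    subst this
    rcases hz with hz | hz
    · exact hd z hy'.2 hy'.1 hz
    · exact P.notMem_X (hS z hy'.2).1 (hS z hy'.2).2 hz
  refine cx_borsuk P.X (P.comp x) P.isClosed_X P.R (fun z hz => Or.inr (P.hR z hz)) o1 o2 o3 x
    (mem_connectedComponentIn (P.notMem_X (hS x hx).1 (hS x hx).2)) (n x)
    (fun w => ∏ y ∈ S.erase x, (w - y) ^ (n y)) g ?_ ?_ hg ?_
  · refine continuousOn_finsetProd _ fun y hy => ContinuousOn.zpow₀ (by fun_prop) _ ?_
    intro z hz
    exact Or.inl (hne z hz y hy)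
  · intro z hz
    exact Finset.prod_ne_zero_iff.2 fun y hy => zpow_ne_zero _ (hne z hz y hy)
  · intro w hw
    rw [hge w hw, Finset.mul_prod_erase S (fun y => (w - y) ^ (n y)) hx]

lemma notMem_comp_symm {x y : ℂ} (h : y ∉ P.comp x) : x ∉ P.comp y := by
  intro hx
  apply h
  have hy : y ∈ P.Xᶜ := by
    by_contra hy
    rw [comp, connectedComponentIn_eq_empty hy] at hx
    exact hx
  rw [comp, ← connectedComponentIn_eq hx]
  exact mem_connectedComponentIn hy

lemma J_int {x y : ℂ} (hx : ‖x‖ < P.δ ∧ x ∉ range P.γ) (hy : ‖y‖ < P.δ ∧ y ∉ range P.γ) :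
    ∃ n : ℤ, P.J x = P.J y + n * (2 * Real.pi * Complex.I) := by
  rw [← Complex.exp_eq_exp_iff_exists_int, P.J_exp hx.1 hx.2, P.J_exp hy.1 hy.2]

/-- points with equal winding are in the same component -/
lemma mem_comp_of_J {x y : ℂ} (hx : ‖x‖ < P.δ ∧ x ∉ range P.γ) (hy : ‖y‖ < P.δ ∧ y ∉ range P.γ)
    (hJ : P.J x = P.J y) : y ∈ P.comp x := by
  classical
  by_contra h
  have hxy : x ≠ y := by
    rintro rfl
    exact h (mem_connectedComponentIn (P.notMem_X hx.1 hx.2))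
  have := P.exponent_zero {x, y} (fun z => if z = x then 1 else -1)
    (by simp only [Finset.mem_insert, Finset.mem_singleton]; rintro z (rfl | rfl) <;> assumption)
    (by rw [Finset.sum_pair hxy]; simp [hxy.symm])
    (by rw [Finset.sum_pair hxy]; simp [hxy.symm, hJ]) x (by simp)
    (by
      simp only [Finset.mem_insert, Finset.mem_singleton]
      rintro z (rfl | rfl) hz
      · exact absurd rfl hz
      · exact h)
  simp at this

lemma three_comp {x y z : ℂ} (hx : ‖x‖ < P.δ ∧ x ∉ range P.γ) (hy : ‖y‖ < P.δ ∧ y ∉ range P.γ)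
    (hz : ‖z‖ < P.δ ∧ z ∉ range P.γ) (h1 : y ∉ P.comp x) (h2 : z ∉ P.comp x) :
    z ∈ P.comp y := by
  classical
  by_contra h3
  have hself : ∀ {x}, ‖x‖ < P.δ ∧ x ∉ range P.γ → x ∈ P.comp x := fun hx =>
    mem_connectedComponentIn (P.notMem_X hx.1 hx.2)
  have hxy : x ≠ y := by rintro rfl; exact h1 (hself hx)
  have hxz : x ≠ z := by rintro rfl; exact h2 (hself hx)
  have hyz : y ≠ z := by rintro rfl; exact h3 (hself hy)
  obtain ⟨m, hm⟩ := P.J_int hx hz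
  obtain ⟨n, hn⟩ := P.J_int hy hz
  have hsum : ∀ {M : Type} [AddCommMonoid M] (f : ℂ → M),
      ∑ w ∈ ({x, y, z} : Finset ℂ), f w = f x + (f y + f z) := by
    intro M _ f
    rw [Finset.sum_insert (by simp [hxy, hxz]), Finset.sum_pair hyz]
  have key := P.exponent_zero {x, y, z} (fun w => if w = x then n else if w = y then -m else m - n)
    (by
      simp only [Finset.mem_insert, Finset.mem_singleton]
      rintro z (rfl | rfl | rfl) <;> assumption)
    (by rw [hsum]; simp only [hxy.symm, hxz.symm, hyz.symm, if_true, if_false]; ring)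
    (by
      rw [hsum]; simp only [hxy.symm, hxz.symm, hyz.symm, if_true, if_false]
      rw [hm, hn]; push_cast; ring) y (by simp)
    (by
      simp only [Finset.mem_insert, Finset.mem_singleton]
      rintro w (rfl | rfl | rfl) hw
      · exact P.notMem_comp_symm h1
      · exact absurd rfl hw
      · exact h3)
  simp only [hxy.symm, if_true, if_false, neg_eq_zero] at key
  subst key
  apply h2
  apply P.mem_comp_of_J hx hz
  rw [hm]; simp


lemma nonconst (ε : ℝ) (hε : 0 < ε) (hεδ : ε ≤ P.δ) :
    ∃ x y : ℂ, ‖x‖ < ε ∧ x ∉ range P.γ ∧ ‖y‖ < ε ∧ y ∉ range P.γ ∧ P.J x ≠ P.J y := by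
  classical
  by_contra! hcon
  have a0 := P.a0
  have b0 := P.b0
  obtain ⟨c, hce, hc⟩ : ∃ c : ℂ, Complex.exp c = P.γ 1 / P.γ 0 ∧
      ∀ x, ‖x‖ < ε → x ∉ range P.γ → P.J x = c := by
    by_cases hex : ∃ x, ‖x‖ < ε ∧ x ∉ range P.γ
    · obtain ⟨x, hx, hxr⟩ := hex
      exact ⟨P.J x, P.J_exp (by linarith) hxr, fun y hy hyr => hcon y x hy hyr hx hxr⟩
    · push Not at hex
      exact ⟨_, Complex.exp_log (div_ne_zero b0 a0), fun x hx hxr => absurd (hex x hx) hxr⟩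
  obtain ⟨R, hR⟩ := (isCompact_range P.hγ).isBounded.subset_ball (0 : ℂ)
  let Γ1 : Set ℂ := P.γ '' (Iic P.m) \ ball 0 ε
  let Γ2 : Set ℂ := P.γ '' (Ici P.m) \ ball 0 ε
  have k1 : IsClosed Γ1 :=
    (((isClosed_Iic.isCompact).image P.hγ).isClosed).sdiff isOpen_ball
  have k2 : IsClosed Γ2 :=
    (((isClosed_Ici.isCompact).image P.hγ).isClosed).sdiff isOpen_ball
  have ha : P.γ 0 ∈ Γ1 := by
    refine ⟨⟨0, P.m.2.1, rfl⟩, ?_⟩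
    rw [mem_ball_zero_iff, not_lt]
    exact hεδ.trans (P.hKδ _ P.h0)
  have hb : P.γ 1 ∈ Γ2 := by
    refine ⟨⟨1, P.m.2.2, rfl⟩, ?_⟩
    rw [mem_ball_zero_iff, not_lt]
    exact hεδ.trans (P.hKδ _ P.h1)
  have hdis : Disjoint (Γ2 ∪ (ball (0 : ℂ) R)ᶜ) Γ1 := by
    rw [Set.disjoint_left]
    rintro z (⟨⟨v, hv, rfl⟩, hz⟩ | hz) ⟨⟨u, hu, huv⟩, hz'⟩
    · have : u = v := P.inj huv
      subst this
      have : u = P.m := le_antisymm hu hv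
      subst this
      rw [P.hm] at hz
      exact hz (by simpa using hε)
    · exact hz (hR ⟨u, huv⟩)
  obtain ⟨ψ, hψ0, hψ1, -⟩ := exists_continuous_zero_one_of_isClosed
    (k2.union isOpen_ball.isClosed_compl) k1 hdis
  have hψ0' : ∀ z ∈ Γ2, ψ z = 0 := fun z hz => hψ0 (Or.inl hz)
  have hψ1' : ∀ z ∈ Γ1, ψ z = 1 := fun z hz => hψ1 hz
  let χ : ℂ → ℝ := fun z => max 0 (min 1 (3 * ψ z - 1))
  have hχ : Continuous χ := by fun_prop
  -- the logarithm
  let L : ℂ → ℂ := fun x => if ‖x‖ < ε then ell x (P.γ 1) - ell x (P.γ 0) + c else P.E 1 x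
  have hL1 : EqOn L (fun x => ell x (P.γ 1) - ell x (P.γ 0) + c) (ball 0 ε) := fun x hx =>
    if_pos (by simpa using hx)
  have hL2 : EqOn L (P.E 1) (range P.γ)ᶜ := by
    intro x hx
    by_cases h : ‖x‖ < ε
    · have := hc x h hx
      simp only [L, h, if_true]
      rw [← this, J]; ring
    · simp only [L, h, if_false]
  have hcov : ∀ x, x ∉ Γ1 → x ∉ Γ2 → x ∈ ball 0 ε ∨ x ∈ (range P.γ)ᶜ := by
    intro x h1 h2
    by_contra! h
    obtain ⟨h3, h4⟩ := h
    rw [notMem_compl_iff] at h4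
    obtain ⟨u, rfl⟩ := h4
    rcases le_total u P.m with hu | hu
    · exact h1 ⟨⟨u, hu, rfl⟩, h3⟩
    · exact h2 ⟨⟨u, hu, rfl⟩, h3⟩
  have hLe : ∀ x, x ∉ Γ1 → x ∉ Γ2 → Complex.exp (L x) = (P.γ 1 - x) / (P.γ 0 - x) := by
    intro x h1 h2
    rcases hcov x h1 h2 with h | h
    · rw [hL1 h]
      have hx : ‖x‖ < P.δ := by
        have : ‖x‖ < ε := by simpa using h
        linarith
      have h3 : P.γ 0 - x ≠ 0 := by
        intro h3
        have : P.γ 0 = x := by linear_combination h3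
        exact h1 (this ▸ ha)
      simp only
      rw [Complex.exp_add, Complex.exp_sub, hce, ell_exp hx (P.hKδ _ P.h1),
        ell_exp hx (P.hKδ _ P.h0)]
      field_simp
    · rw [hL2 h, P.hEe _ _ h]
  have hLc : ∀ x, x ∉ Γ1 → x ∉ Γ2 → ContinuousAt L x := by
    intro x h1 h2
    rcases hcov x h1 h2 with h | h
    · have : ContinuousOn L (ball 0 ε) := by
        refine ContinuousOn.congr ?_ hL1
        exact (((ell_cont_left (P.hKδ _ P.h1)).sub (ell_cont_left (P.hKδ _ P.h0))).add
          continuousOn_const).mono (ball_subset_ball hεδ)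
      exact this.continuousAt (isOpen_ball.mem_nhds h)
    · have : ContinuousOn L (range P.γ)ᶜ := by
        refine ContinuousOn.congr ?_ hL2
        exact P.hE.comp (f := fun x => ((1 : unitInterval), x)) (by fun_prop)
          (fun w hw => ⟨mem_univ _, hw⟩)
      exact this.continuousAt (P.isClosed_range.isOpen_compl.mem_nhds h)
  let h : ℂ → ℂ := fun z => if z ∈ Γ1 then z - P.γ 1 else if z ∈ Γ2 then z - P.γ 0 else
    (z - P.γ 0) * Complex.exp (χ z * L z)
  have d12 : ∀ z ∈ Γ1, z ∉ Γ2 := fun z h1 h2 => by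
    have := hψ1' z h1; rw [hψ0' z h2] at this; norm_num at this
  have e1 : EqOn h (fun z => z - P.γ 1) {z | 2 / 3 < ψ z} := by
    intro z hz
    have hz' : 2 / 3 < ψ z := hz
    by_cases h1 : z ∈ Γ1
    · simp [h, h1]
    · have h2 : z ∉ Γ2 := fun h2 => by rw [hψ0' z h2] at hz'; norm_num at hz'
      have hχz : χ z = 1 := by
        simp only [χ]
        rw [min_eq_left (by linarith)]; norm_num
      simp only [h, h1, h2, if_false, hχz, Complex.ofReal_one, one_mul]
      rw [hLe z h1 h2]
      have h3 : P.γ 0 - z ≠ 0 := by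
        intro h3
        have : P.γ 0 = z := by linear_combination h3
        exact h1 (this ▸ ha)
      field_simp
      ring
  have e2 : EqOn h (fun z => z - P.γ 0) {z | ψ z < 1 / 3} := by
    intro z hz
    have hz' : ψ z < 1 / 3 := hz
    have h1 : z ∉ Γ1 := fun h1 => by rw [hψ1' z h1] at hz'; norm_num at hz'
    by_cases h2 : z ∈ Γ2
    · simp [h, h1, h2]
    · have hχz : χ z = 0 := by
        simp only [χ]
        rw [min_eq_right (by linarith), max_eq_left (by linarith)]
      simp [h, h1, h2, hχz]
  have e3 : EqOn h (fun z => (z - P.γ 0) * Complex.exp (χ z * L z)) (Γ1 ∪ Γ2)ᶜ := by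
    intro z hz
    simp only [mem_compl_iff, mem_union, not_or] at hz
    simp [h, hz.1, hz.2]
  have hcont : Continuous h := by
    rw [continuous_iff_continuousAt]
    intro z
    by_cases h1 : z ∈ Γ1
    · have ho : IsOpen {z | 2 / 3 < ψ z} := isOpen_lt continuous_const ψ.continuous
      refine ContinuousAt.congr (f := fun z => z - P.γ 1) (by fun_prop) ?_
      refine (e1.symm).eventuallyEq_of_mem (ho.mem_nhds ?_)
      show 2 / 3 < ψ z
      rw [hψ1' z h1]; norm_num
    by_cases h2 : z ∈ Γ2
    · have ho : IsOpen {z | ψ z < 1 / 3} := isOpen_lt ψ.continuous continuous_const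
      refine ContinuousAt.congr (f := fun z => z - P.γ 0) (by fun_prop) ?_
      refine (e2.symm).eventuallyEq_of_mem (ho.mem_nhds ?_)
      show ψ z < 1 / 3
      rw [hψ0' z h2]; norm_num
    · have ho : IsOpen (Γ1 ∪ Γ2)ᶜ := (k1.union k2).isOpen_compl
      refine ContinuousAt.congr ?_ ((e3.symm).eventuallyEq_of_mem (ho.mem_nhds ?_))
      · have := hLc z h1 h2
        fun_prop
      · simp [h1, h2]
  have hne : ∀ z, h z ≠ 0 := by
    intro z
    by_cases h1 : z ∈ Γ1
    · simp only [h, h1, if_true]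
      rw [sub_ne_zero]; rintro rfl; exact d12 _ h1 hb
    by_cases h2 : z ∈ Γ2
    · simp only [h, h1, h2, if_true, if_false]
      rw [sub_ne_zero]; rintro rfl; exact h1 ha
    · simp only [h, h1, h2, if_false]
      refine mul_ne_zero ?_ (Complex.exp_ne_zero _)
      rw [sub_ne_zero]; rintro rfl; exact h1 ha
  have := cx_degree h hcont hne (P.γ 0) R 1 (by
    intro z hz
    rw [zpow_one]
    apply e2
    show ψ z < 1 / 3
    have : ψ z = 0 := hψ0 (Or.inr (by simpa using hz))
    rw [this]; norm_num)
  norm_num at this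

end PArc


/-- the function `1 / (z - y)` on the Riemann sphere -/
def kap (y : ℂ) (z : OnePoint ℂ) : ℂ := z.elim 0 (fun z => (z - y)⁻¹)

@[simp] lemma kap_infty (y : ℂ) : kap y OnePoint.infty = 0 := rfl
@[simp] lemma kap_coe (y z : ℂ) : kap y (z : OnePoint ℂ) = (z - y)⁻¹ := rfl

lemma kap_cont (y : ℂ) : ContinuousOn (kap y) {(y : OnePoint ℂ)}ᶜ := by
  intro z hz
  apply ContinuousAt.continuousWithinAt
  induction z using OnePoint.rec with
  | infty =>
    rw [OnePoint.continuousAt_infty']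
    simp only [Filter.coclosedCompact_eq_cocompact]
    show Filter.Tendsto (fun z : ℂ => (z - y)⁻¹) (Filter.cocompact ℂ) (nhds 0)
    refine Filter.Tendsto.comp Filter.tendsto_inv₀_cobounded ?_
    rw [← Metric.cobounded_eq_cocompact]
    simp [sub_eq_add_neg]
  | coe z =>
    rw [OnePoint.continuousAt_coe]
    have hzy : z - y ≠ 0 := by
      intro h
      apply hz
      have : z = y := by linear_combination h
      simp [this]
    show ContinuousAt (fun z : ℂ => (z - y)⁻¹) z
    fun_prop (disch := assumption)

/-- the Moebius function `(z - x) / (z - y)` -/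
def moeb (x y : ℂ) (z : OnePoint ℂ) : ℂ := 1 + (y - x) * kap y z

@[simp] lemma moeb_infty (x y : ℂ) : moeb x y OnePoint.infty = 1 := by simp [moeb]

lemma moeb_coe (x y z : ℂ) (h : z ≠ y) : moeb x y (z : OnePoint ℂ) = (z - x) / (z - y) := by
  have : z - y ≠ 0 := sub_ne_zero.2 h
  simp only [moeb, kap_coe]
  field_simp
  ring

lemma moeb_ne {x y : ℂ} {z : OnePoint ℂ} (hx : z ≠ x) (hy : z ≠ y) : moeb x y z ≠ 0 := by
  induction z using OnePoint.rec with
  | infty => simp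
  | coe z =>
    have h1 : z ≠ x := fun h => hx (by rw [h])
    have h2 : z ≠ y := fun h => hy (by rw [h])
    rw [moeb_coe _ _ _ h2]
    exact div_ne_zero (sub_ne_zero.2 h1) (sub_ne_zero.2 h2)

lemma moeb_mul {x y w : ℂ} {z : OnePoint ℂ} (hy : z ≠ y) (hw : z ≠ w) :
    moeb x y z * moeb y w z = moeb x w z := by
  induction z using OnePoint.rec with
  | infty => simp
  | coe z =>
    have h1 : z ≠ y := fun h => hy (by rw [h])
    have h2 : z ≠ w := fun h => hw (by rw [h])
    rw [moeb_coe _ _ _ h1, moeb_coe _ _ _ h2, moeb_coe _ _ _ h2,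
      div_mul_div_cancel₀ (sub_ne_zero.2 h1)]

lemma moeb_cont (x y : ℂ) : ContinuousOn (moeb x y) {(y : OnePoint ℂ)}ᶜ :=
  continuousOn_const.add (continuousOn_const.mul (kap_cont y))

def LogRel (f : ℂ → OnePoint ℂ) (S : Set ℂ) (x y : ℂ) : Prop :=
  ∃ M : ℂ → ℂ, ContinuousOn M S ∧ ∀ c ∈ S, Complex.exp (M c) = moeb x y (f c)

lemma LogRel.trans {f : ℂ → OnePoint ℂ} {S : Set ℂ} {x y z : ℂ} (h1 : LogRel f S x y)
    (h2 : LogRel f S y z) (hy : ∀ c ∈ S, f c ≠ y) (hz : ∀ c ∈ S, f c ≠ z) : LogRel f S x z := by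
  obtain ⟨M, hM, hM'⟩ := h1
  obtain ⟨N, hN, hN'⟩ := h2
  refine ⟨fun c => M c + N c, hM.add hN, fun c hc => ?_⟩
  rw [Complex.exp_add, hM' c hc, hN' c hc, moeb_mul (hy c hc) (hz c hc)]

lemma logRel_disk {f : ℂ → OnePoint ℂ} (hf : Continuous f) (S : Set ℂ) {x y : ℂ}
    (hx : (x : OnePoint ℂ) ∉ range f) (hy : (y : OnePoint ℂ) ∉ range f) : LogRel f S x y := by
  obtain ⟨H, h1, h2⟩ := cx_log_plane (fun c => moeb x y (f c))
    ((moeb_cont x y).comp_continuous hf (fun c h => hy ⟨c, h⟩))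
    (fun c => moeb_ne (fun h => hx ⟨c, h⟩) (fun h => hy ⟨c, h⟩))
  exact ⟨H, h1.continuousOn, fun c _ => h2 c⟩

namespace PArc

variable (P : PArc)

lemma logRel_comp {f : ℂ → OnePoint ℂ} (hf : Continuous f) (S : Set ℂ) {x y : ℂ}
    (hfX : ∀ c ∈ S, ∀ z : ℂ, f c = z → z ∈ P.X) (hx : x ∉ P.X) (hy : y ∈ P.comp x) :
    LogRel f S y x := by
  have hxx : x ∈ P.comp x := mem_connectedComponentIn hx
  have hsub : P.comp x ⊆ P.Xᶜ := connectedComponentIn_subset _ _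
  have ho : IsOpen (P.comp x) := P.isClosed_X.isOpen_compl.connectedComponentIn
  have hpc : IsPathConnected (P.comp x) := by
    rw [← ho.isConnected_iff_isPathConnected]
    exact isConnected_connectedComponentIn_iff.2 hx
  obtain ⟨η, hη⟩ := hpc.joinedIn x hxx y hy
  obtain ⟨H, H1, H2, -⟩ := cx_lift_on S (fun u c => moeb (η u) x (f c))
    (by
      simp only [Function.uncurry_def, moeb]
      refine continuousOn_const.add (ContinuousOn.mul (by fun_prop) ?_)
      refine (kap_cont x).comp (by fun_prop) ?_
      rintro ⟨u, c⟩ ⟨-, hc⟩ h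
      exact hx (hfX c hc x h))
    (by
      intro u c hc
      exact moeb_ne (fun h => hsub (hη u) (hfX c hc _ h)) (fun h => hx (hfX c hc _ h)))
    (fun _ => 0) continuousOn_const (by intro c _; simp [moeb])
  refine ⟨H 1, ?_, ?_⟩
  · exact H1.comp (f := fun c => ((1 : unitInterval), c)) (by fun_prop)
      (fun c hc => ⟨mem_univ _, hc⟩)
  · intro c hc
    rw [H2 1 c hc, η.target]

lemma J_eq_of_logRel {f : ℂ → OnePoint ℂ} (hf : Continuous f) (σ τ : unitInterval → ℂ)
    (hσ : Continuous σ) (hτ : Continuous τ) (h01 : σ 0 = τ 1) (h10 : σ 1 = τ 0)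
    (hfσ : ∀ u, f (σ u) = P.γ u) (hfτ : ∀ v, ∀ z : ℂ, f (τ v) = z → P.δ ≤ ‖z‖) {x y : ℂ}
    (hx : ‖x‖ < P.δ ∧ x ∉ range P.γ) (hy : ‖y‖ < P.δ ∧ y ∉ range P.γ)
    (h : LogRel f (range σ ∪ range τ) x y) : P.J x = P.J y := by
  obtain ⟨M, hM, hMe⟩ := h
  have hEc : ∀ z, z ∉ range P.γ → Continuous (fun u => P.E u z) := fun z hz =>
    P.hE.comp_continuous (f := fun u => (u, z)) (by fun_prop) (fun u => ⟨mem_univ _, hz⟩)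
  have hyγ : ∀ u, P.γ u ≠ y := fun u h => hy.2 ⟨u, h⟩
  have s1 := cx_const (fun u => M (σ u) - P.E u x + P.E u y)
    (((hM.comp_continuous hσ (fun u => Or.inl ⟨u, rfl⟩)).sub (hEc x hx.2)).add (hEc y hy.2))
    (by
      have : ∀ u, Complex.exp (M (σ u) - P.E u x + P.E u y) = (P.γ 0 - x) / (P.γ 0 - y) := by
        intro u
        have := P.sub_ne hx.2 u
        have := P.sub_ne hx.2 0
        have := P.sub_ne hy.2 u
        have := P.sub_ne hy.2 0
        rw [Complex.exp_add, Complex.exp_sub, hMe _ (Or.inl ⟨u, rfl⟩), hfσ,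
          moeb_coe _ _ _ (hyγ u), P.hEe _ _ hx.2, P.hEe _ _ hy.2]
        field_simp
      intro a b; rw [this, this]) 1 0
  have hτ0 : ∀ v, f (τ v) ≠ ((0 : ℂ) : OnePoint ℂ) := fun v h => by
    have := hfτ v 0 h
    rw [norm_zero] at this; linarith [P.hδ]
  have hsl : ∀ x : ℂ, ‖x‖ < P.δ → ∀ v, 1 - x * kap 0 (f (τ v)) ∈ Complex.slitPlane := by
    intro x hx v
    have h2 := hfτ v
    generalize f (τ v) = z at h2
    induction z using OnePoint.rec with
    | infty => simp
    | coe z =>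
      have := ell_mem hx (h2 z rfl)
      simpa [div_eq_mul_inv] using this
  have hLc : ∀ x : ℂ, ‖x‖ < P.δ →
      Continuous (fun v => Complex.log (1 - x * kap 0 (f (τ v)))) := by
    intro x hx
    refine Continuous.clog ?_ (hsl x hx)
    refine continuous_const.sub (continuous_const.mul ?_)
    exact (kap_cont 0).comp_continuous (hf.comp hτ) (fun v => hτ0 v)
  have s2 := cx_const (fun v => M (τ v) - Complex.log (1 - x * kap 0 (f (τ v))) +
      Complex.log (1 - y * kap 0 (f (τ v))))
    (((hM.comp_continuous hτ (fun u => Or.inr ⟨u, rfl⟩)).sub (hLc x hx.1)).add (hLc y hy.1))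
    (by
      have : ∀ v, Complex.exp (M (τ v) - Complex.log (1 - x * kap 0 (f (τ v))) +
          Complex.log (1 - y * kap 0 (f (τ v)))) = 1 := by
        intro v
        have n1 := Complex.slitPlane_ne_zero (hsl x hx.1 v)
        have n2 := Complex.slitPlane_ne_zero (hsl y hy.1 v)
        rw [Complex.exp_add, Complex.exp_sub, hMe _ (Or.inr ⟨v, rfl⟩), Complex.exp_log n1,
          Complex.exp_log n2]
        have h2 := hfτ v
        have h3 := hτ0 v
        generalize f (τ v) = z at h2 h3 n1 n2
        induction z using OnePoint.rec with
        | infty => simp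
        | coe z =>
          have hz0 : z ≠ 0 := fun h => h3 (by rw [h])
          have hzx : z ≠ x := by
            rintro rfl
            linarith [h2 z rfl, hx.1]
          have hzy : z ≠ y := by
            rintro rfl
            linarith [h2 z rfl, hy.1]
          have := sub_ne_zero.2 hzx
          have := sub_ne_zero.2 hzy
          rw [moeb_coe _ _ _ hzy]
          have q : ∀ x : ℂ, 1 - x * kap 0 (z : OnePoint ℂ) = (z - x) / z := by
            intro x; simp only [kap_coe, sub_zero]; field_simp
          rw [q, q]
          field_simp
      intro a b; rw [this, this]) 1 0
  have q : ∀ x z : ℂ, Complex.log (1 - x * kap 0 (z : OnePoint ℂ)) = ell x z := by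
    intro x z; simp [ell, div_eq_mul_inv]
  simp only [← h01, ← h10, hfσ, q] at s2
  simp only [P.hE0 _ hx.2, P.hE0 _ hy.2] at s1
  simp only [J]
  linear_combination -s1 - s2

end PArc

theorem planar_core (f : Fin 3 → ℂ → OnePoint ℂ) (hf : ∀ i, Continuous (f i))
    (σ τ : unitInterval → ℂ)
    (hσ : Continuous σ) (hτ : Continuous τ) (h01 : σ 0 = τ 1) (h10 : σ 1 = τ 0)
    (γ : unitInterval → ℂ) (hγ : Continuous γ) (inj : Function.Injective γ)
    (m : unitInterval) (hm : γ m = 0) (hm0 : m ≠ 0) (hm1 : m ≠ 1)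
    (hfσ : ∀ i u, f i (σ u) = γ u) (hfτ : ∀ i v u, f i (τ v) = γ u → u = 0 ∨ u = 1) :
    ∃ i j : Fin 3, i ≠ j ∧ ∃ U : Set ℂ, IsOpen U ∧ IsPreconnected U ∧ 0 ∈ closure U ∧
      (∀ z ∈ U, (z : OnePoint ℂ) ∈ range (f i)) ∧ (∀ z ∈ U, (z : OnePoint ℂ) ∈ range (f j)) := by
  classical
  obtain ⟨R, hR⟩ := (isCompact_range hγ).isBounded.subset_ball (0 : ℂ)
  let K : Set ℂ := (OnePoint.some ⁻¹' (⋃ i, range (fun v => f i (τ v)))) ∪ (ball (0 : ℂ) R)ᶜ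
  have hK : IsClosed K := by
    refine IsClosed.union ?_ isOpen_ball.isClosed_compl
    refine IsClosed.preimage OnePoint.continuous_coe ?_
    exact isClosed_iUnion_of_finite fun i => (isCompact_range ((hf i).comp hτ)).isClosed
  have hKγ : ∀ u, γ u ∈ K → u = 0 ∨ u = 1 := by
    rintro u (h | h)
    · obtain ⟨i, v, hv⟩ := mem_iUnion.1 h
      exact hfτ i v u hv
    · exact absurd (hR ⟨u, rfl⟩) h
  have h0K : (0 : ℂ) ∈ Kᶜ := by
    intro h
    rw [← hm] at h
    rcases hKγ m h with h | h
    · exact hm0 h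
    · exact hm1 h
  obtain ⟨δ, hδ, hδK⟩ := Metric.isOpen_iff.1 hK.isOpen_compl 0 h0K
  obtain ⟨E, hE, hEe, hE0⟩ := cx_lift_on (range γ)ᶜ (fun u x => (γ u - x) / (γ 0 - x))
    (by
      simp only [Function.uncurry_def]
      refine ContinuousOn.div (by fun_prop) (by fun_prop) ?_
      rintro ⟨u, x⟩ ⟨-, hx⟩ h
      exact hx ⟨0, by linear_combination h⟩)
    (by
      intro u x hx
      refine div_ne_zero ?_ ?_
      · intro h; exact hx ⟨u, by linear_combination h⟩
      · intro h; exact hx ⟨0, by linear_combination h⟩)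
    (fun _ => 0) continuousOn_const
    (by
      intro x hx
      rw [Complex.exp_zero, div_self]
      intro h; exact hx ⟨0, by linear_combination h⟩)
  let P : PArc :=
    { γ := γ, hγ := hγ, inj := inj, m := m, hm := hm, K := K, hK := hK, R := R
      hR := fun z hz => Or.inr (by simpa using hz)
      δ := δ, hδ := hδ
      hKδ := fun k hk => by
        by_contra! h
        exact hδK (by simpa using h) hk
      h0 := Or.inl (mem_iUnion.2 ⟨0, 1, by simp only; rw [← h01, hfσ]⟩)
      h1 := Or.inl (mem_iUnion.2 ⟨0, 0, by simp only; rw [← h10, hfσ]⟩)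
      hmeetK := hKγ, E := E, hE := hE, hEe := hEe, hE0 := hE0 }
  have hfσ' : ∀ i u, f i (σ u) = P.γ u := hfσ
  have hτK : ∀ i v, ∀ z : ℂ, f i (τ v) = z → z ∈ P.K := fun i v z hz =>
    Or.inl (mem_iUnion.2 ⟨i, v, hz⟩)
  have hfτ' : ∀ i v, ∀ z : ℂ, f i (τ v) = z → P.δ ≤ ‖z‖ := fun i v z hz =>
    P.hKδ _ (hτK i v z hz)
  set S : Set ℂ := range σ ∪ range τ with hS
  have hfX : ∀ i, ∀ c ∈ S, ∀ z : ℂ, f i c = z → z ∈ P.X := by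
    rintro i _ (⟨u, rfl⟩ | ⟨v, rfl⟩) z hz
    · rw [hfσ'] at hz
      exact Or.inl ⟨u, OnePoint.coe_injective hz⟩
    · exact Or.inr (hτK i v z hz)
  have hJ : ∀ i, ∀ {x y : ℂ}, (‖x‖ < P.δ ∧ x ∉ range P.γ) → (‖y‖ < P.δ ∧ y ∉ range P.γ) →
      LogRel (f i) S x y → P.J x = P.J y := fun i x y hx hy h =>
    P.J_eq_of_logRel (hf i) σ τ hσ hτ h01 h10 (hfσ' i) (hfτ' i) hx hy h
  have hX : ∀ {x : ℂ}, (‖x‖ < P.δ ∧ x ∉ range P.γ) → x ∉ P.X := fun hx => P.notMem_X hx.1 hx.2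
  have hcX : ∀ {x y : ℂ}, y ∈ P.comp x → y ∉ P.X := fun hy =>
    connectedComponentIn_subset _ _ hy
  have hsymm : ∀ {x y : ℂ}, y ∈ P.comp x → x ∈ P.comp y := by
    intro x y h
    by_contra h'
    exact P.notMem_comp_symm h' h
  have hJc : ∀ {x y : ℂ}, (‖x‖ < P.δ ∧ x ∉ range P.γ) → (‖y‖ < P.δ ∧ y ∉ range P.γ) →
      y ∈ P.comp x → P.J x = P.J y := fun {x y} hx hy h =>
    (hJ 0 hy hx (P.logRel_comp (hf 0) S (hfX 0) (hX hx) h)).symm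
  obtain ⟨x, y, hx1, hx2, hy1, hy2, hxy⟩ := P.nonconst P.δ P.hδ le_rfl
  have hx : ‖x‖ < P.δ ∧ x ∉ range P.γ := ⟨hx1, hx2⟩
  have hy : ‖y‖ < P.δ ∧ y ∉ range P.γ := ⟨hy1, hy2⟩
  have hyx : y ∉ P.comp x := fun h => hxy (hJc hx hy h)
  -- both components accumulate at zero
  have hcl : ∀ {x y : ℂ}, (‖x‖ < P.δ ∧ x ∉ range P.γ) → (‖y‖ < P.δ ∧ y ∉ range P.γ) →
      y ∉ P.comp x → (0 : ℂ) ∈ closure (P.comp x) := by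
    intro x y hx hy hyx
    rw [Metric.mem_closure_iff]
    intro ε hε
    obtain ⟨s, t, hs1, hs2, ht1, ht2, hst⟩ := P.nonconst (min ε P.δ) (lt_min hε P.hδ)
      (min_le_right _ _)
    have hs : ‖s‖ < P.δ ∧ s ∉ range P.γ := ⟨hs1.trans_le (min_le_right _ _), hs2⟩
    have ht : ‖t‖ < P.δ ∧ t ∉ range P.γ := ⟨ht1.trans_le (min_le_right _ _), ht2⟩
    by_cases h1 : s ∈ P.comp x
    · exact ⟨s, h1, by simpa using hs1.trans_le (min_le_left _ _)⟩
    by_cases h2 : t ∈ P.comp x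
    · exact ⟨t, h2, by simpa using ht1.trans_le (min_le_left _ _)⟩
    exact absurd (hJc hs ht (P.three_comp hx hs ht h1 h2)) hst
  have hcover : ∀ i, (∀ z ∈ P.comp x, (z : OnePoint ℂ) ∈ range (f i)) ∨
      (∀ z ∈ P.comp y, (z : OnePoint ℂ) ∈ range (f i)) := by
    intro i
    by_contra! h
    obtain ⟨⟨x', hx', hx'f⟩, ⟨y', hy', hy'f⟩⟩ := h
    apply hxy
    have nf : ∀ {z : ℂ}, z ∉ P.X → ∀ c ∈ S, f i c ≠ z := fun hz c hc h => hz (hfX i c hc _ h)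
    refine hJ i hx hy ?_
    have r1 : LogRel (f i) S x x' :=
      P.logRel_comp (hf i) S (hfX i) (hcX hx') (hsymm hx')
    have r2 : LogRel (f i) S x' y' := logRel_disk (hf i) S hx'f hy'f
    have r3 : LogRel (f i) S y' y := P.logRel_comp (hf i) S (hfX i) (hX hy) hy'
    exact (r1.trans r2 (nf (hcX hx')) (nf (hcX hy'))).trans r3 (nf (hcX hy')) (nf (hX hy))
  have hop : ∀ z, IsOpen (P.comp z) := fun z => P.isClosed_X.isOpen_compl.connectedComponentIn
  have hpc : ∀ z, IsPreconnected (P.comp z) := fun z => isPreconnected_connectedComponentIn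
  have hpig : ∃ i j : Fin 3, i ≠ j ∧
      ((∀ z ∈ P.comp x, (z : OnePoint ℂ) ∈ range (f i)) ∧
        (∀ z ∈ P.comp x, (z : OnePoint ℂ) ∈ range (f j)) ∨
       (∀ z ∈ P.comp y, (z : OnePoint ℂ) ∈ range (f i)) ∧
        (∀ z ∈ P.comp y, (z : OnePoint ℂ) ∈ range (f j))) := by
    have n01 : (0 : Fin 3) ≠ 1 := by decide
    have n02 : (0 : Fin 3) ≠ 2 := by decide
    have n12 : (1 : Fin 3) ≠ 2 := by decide
    rcases hcover 0 with c0 | c0 <;> rcases hcover 1 with c1 | c1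
    · exact ⟨0, 1, n01, Or.inl ⟨c0, c1⟩⟩
    · rcases hcover 2 with c2 | c2
      · exact ⟨0, 2, n02, Or.inl ⟨c0, c2⟩⟩
      · exact ⟨1, 2, n12, Or.inr ⟨c1, c2⟩⟩
    · rcases hcover 2 with c2 | c2
      · exact ⟨1, 2, n12, Or.inl ⟨c1, c2⟩⟩
      · exact ⟨0, 2, n02, Or.inr ⟨c0, c2⟩⟩
    · exact ⟨0, 1, n01, Or.inr ⟨c0, c1⟩⟩
  obtain ⟨i, j, hij, h | h⟩ := hpig
  · exact ⟨i, j, hij, P.comp x, hop x, hpc x, hcl hx hy hyx, h.1, h.2⟩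
  · exact ⟨i, j, hij, P.comp y, hop y, hpc y, hcl hy hx (P.notMem_comp_symm hyx), h.1, h.2⟩


lemma sphere_chart (p : sphere (0 : EuclideanSpace ℝ (Fin 3)) 1) :
    ∃ Ψ : OnePoint ℂ ≃ₜ sphere (0 : EuclideanSpace ℝ (Fin 3)) 1,
      Ψ ((0 : ℂ) : OnePoint ℂ) = p := by
  have : Fact (Module.finrank ℝ (EuclideanSpace ℝ (Fin 3)) = 2 + 1) := ⟨by simp⟩
  have hemb : Topology.IsOpenEmbedding (stereographic' 2 (-p)).symm :=
    (stereographic' 2 (-p)).symm.isOpenEmbedding (by simp)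
  have hpv : p ∈ (stereographic' 2 (-p)).source := by
    simp only [stereographic'_source, mem_compl_iff, mem_singleton_iff]
    exact ne_neg_of_mem_unit_sphere ℝ p
  let L : ℂ ≃ₜ EuclideanSpace ℝ (Fin 2) :=
    (Complex.orthonormalBasisOneI.repr.toHomeomorph).trans
      (Homeomorph.addRight (stereographic' 2 (-p) p))
  let e : ℂ → sphere (0 : EuclideanSpace ℝ (Fin 3)) 1 := (stereographic' 2 (-p)).symm ∘ L
  have he : Topology.IsEmbedding e := hemb.isEmbedding.comp L.isEmbedding
  have hr : range e = {-p}ᶜ := by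
    rw [range_comp, L.surjective.range_eq, image_univ,
      ← stereographic'_source (n := 2) (-p), ← image_univ, ← stereographic'_target (n := 2) (-p)]
    exact (stereographic' 2 (-p)).symm_image_target_eq_source
  refine ⟨OnePoint.equivOfIsEmbeddingOfRangeEq _ _ he hr, ?_⟩
  show e 0 = p
  have : L 0 = stereographic' 2 (-p) p := by simp [L]
  simp only [e, Function.comp_apply, this]
  exact (stereographic' 2 (-p)).left_inv hpv

lemma exp_eq_helper {s t : ℝ}
    (h : Complex.exp (s * Complex.I) = Complex.exp (t * Complex.I)) :
    ∃ n : ℤ, s = t + n * (2 * Real.pi) := by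
  rw [Complex.exp_eq_exp_iff_exists_int] at h
  obtain ⟨n, hn⟩ := h
  refine ⟨n, ?_⟩
  have : ((s : ℂ)) = ((t + n * (2 * Real.pi) : ℝ) : ℂ) := by
    push_cast
    exact mul_right_cancel₀ Complex.I_ne_zero (by linear_combination hn)
  exact_mod_cast this


/-- **Common image claim for three disks glued along an arc.**  Let `A ⊆ S¹` be a closed arc,
`q` a point of its (relative) interior, and `F₁, F₂, F₃ : D² → S²` continuous maps agreeing on
`A`, such that every point of the interior of `A` is an injective point of each restriction
`Gᵢ = Fᵢ|_{S¹}`.  Then, with `p := F₁ q`, some connected open subset `W` of `S²` contains `p`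
in its closure and lies in the image of two of the maps `Fᵢ`. -/
theorem common_image_of_three_disks
    (A : Set (EuclideanSpace ℝ (Fin 2))) (hA : IsClosedArc A)
    (q : EuclideanSpace ℝ (Fin 2)) (hq : q ∈ circleInterior A)
    (F : Fin 3 → EuclideanSpace ℝ (Fin 2) → EuclideanSpace ℝ (Fin 3))
    (hFcont : ∀ i, ContinuousOn (F i) diskS)
    (hFmaps : ∀ i, MapsTo (F i) diskS sphereS)
    (hagree : ∀ i j, ∀ x ∈ A, F i x = F j x)
    (hinjarc : ∀ i, ∀ a ∈ circleInterior A, ∀ b ∈ circleS, F i b = F i a → b = a) :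
    ∃ i j : Fin 3, i ≠ j ∧ ∃ W : Set (EuclideanSpace ℝ (Fin 3)),
      (∃ V, IsOpen V ∧ W = V ∩ sphereS) ∧ IsPreconnected W ∧
      F 0 q ∈ closure W ∧ W ⊆ F i '' diskS ∧ W ⊆ F j '' diskS := by

  classical
  obtain ⟨hqA, V, hVo, hqV, hVA⟩ := hq
  have hqc : q ∈ circleS := hA.1 hqA
  let ρ := Complex.orthonormalBasisOneI.repr
  let q' : ℂ := ρ.symm q
  have hq' : ‖q'‖ = 1 := by
    have : ‖q‖ = 1 := by simpa [circleS] using hqc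
    simpa [q'] using this
  have hq0 : q' ≠ 0 := by rw [← norm_ne_zero_iff, hq']; norm_num
  let dsk : ℂ → EuclideanSpace ℝ (Fin 2) := fun z => ρ (q' * (z / ((max 1 ‖z‖ : ℝ) : ℂ)))
  have hm0 : ∀ z : ℂ, ((max 1 ‖z‖ : ℝ) : ℂ) ≠ 0 := by
    intro z
    have : (0 : ℝ) < max 1 ‖z‖ := lt_of_lt_of_le one_pos (le_max_left _ _)
    exact_mod_cast this.ne'
  have hdc : Continuous dsk := by
    refine ρ.continuous.comp (continuous_const.mul (continuous_id.div ?_ hm0))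
    fun_prop
  have hdd : ∀ z, dsk z ∈ diskS := by
    intro z
    simp only [diskS, dsk, mem_closedBall_zero_iff, LinearIsometryEquiv.norm_map, norm_mul, hq',
      one_mul, norm_div, Complex.norm_real]
    have h1 : (0 : ℝ) < max 1 ‖z‖ := lt_of_lt_of_le one_pos (le_max_left _ _)
    rw [Real.norm_of_nonneg h1.le, div_le_one h1]
    exact le_max_right _ _
  have hde : ∀ t : ℝ, dsk (Complex.exp (t * Complex.I)) = ρ (q' * Complex.exp (t * Complex.I)) := by
    intro t
    simp [dsk, Complex.norm_exp_ofReal_mul_I]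
  have hdc1 : ∀ t : ℝ, dsk (Complex.exp (t * Complex.I)) ∈ circleS := by
    intro t
    rw [hde]
    simp [circleS, hq', Complex.norm_exp_ofReal_mul_I]
  have hdinj : ∀ s t : ℝ, dsk (Complex.exp (s * Complex.I)) = dsk (Complex.exp (t * Complex.I)) →
      Complex.exp (s * Complex.I) = Complex.exp (t * Complex.I) := by
    intro s t h
    rw [hde, hde] at h
    exact mul_left_cancel₀ hq0 (ρ.injective h)
  have hd0 : dsk (Complex.exp ((0 : ℝ) * Complex.I)) = q := by
    rw [hde]; simp [q']
  have hqd : q ∈ diskS := hd0 ▸ hdd _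
  obtain ⟨Ψ, hΨ⟩ := sphere_chart ⟨F 0 q, hFmaps 0 hqd⟩
  let f : Fin 3 → ℂ → OnePoint ℂ := fun i z => Ψ.symm ⟨F i (dsk z), hFmaps i (hdd z)⟩
  have hf : ∀ i, Continuous (f i) := by
    intro i
    refine Ψ.symm.continuous.comp (Continuous.subtype_mk ?_ _)
    exact (hFcont i).comp_continuous hdc hdd
  have hfF : ∀ i z w, f i z = f i w → F i (dsk z) = F i (dsk w) := by
    intro i z w h
    exact congrArg Subtype.val (Ψ.symm.injective h)
  have hfA : ∀ i j z, dsk z ∈ A → f i z = f j z := by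
    intro i j z hz
    simp only [f, hagree i j _ hz]
  -- choose the small angle
  let T : Set ℝ := {t | dsk (Complex.exp (t * Complex.I)) ∈ V ∧
    f 0 (Complex.exp (t * Complex.I)) ∈ range (OnePoint.some : ℂ → OnePoint ℂ)}
  have hTo : IsOpen T := by
    refine IsOpen.inter (hVo.preimage ?_) (OnePoint.isOpenEmbedding_coe.isOpen_range.preimage ?_)
    · exact hdc.comp (by fun_prop)
    · exact (hf 0).comp (by fun_prop)
  have hf0 : f 0 (Complex.exp ((0 : ℝ) * Complex.I)) = ((0 : ℂ) : OnePoint ℂ) := by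
    simp only [f, hd0]
    rw [← hΨ, Homeomorph.symm_apply_apply]
  have hT0 : (0 : ℝ) ∈ T := ⟨by rw [hd0]; exact hqV, by rw [hf0]; exact ⟨0, rfl⟩⟩
  obtain ⟨ε, hε, hεT⟩ := Metric.isOpen_iff.1 hTo 0 hT0
  obtain ⟨θ, hθ0, hθε, hθ1⟩ : ∃ θ : ℝ, 0 < θ ∧ θ < ε ∧ θ < 1 :=
    ⟨min ε 1 / 2, by positivity, by have := min_le_left ε 1; linarith,
      by have := min_le_right ε 1; linarith⟩
  have hpi := Real.pi_gt_three
  have hθT : ∀ t : ℝ, |t| ≤ θ → t ∈ T := by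
    intro t ht
    apply hεT
    rw [mem_ball_zero_iff, Real.norm_eq_abs]; linarith
  let sa : unitInterval → ℝ := fun u => (2 * (u : ℝ) - 1) * θ
  let ta : unitInterval → ℝ := fun v => θ + v * (2 * Real.pi - 2 * θ)
  have hsa : ∀ u, |sa u| ≤ θ := by
    intro u
    have h1 := u.2.1
    have h2 := u.2.2
    simp only [sa]
    rw [abs_mul, abs_of_pos hθ0]
    have : |2 * (u : ℝ) - 1| ≤ 1 := by rw [abs_le]; constructor <;> linarith
    nlinarith
  let σ : unitInterval → ℂ := fun u => Complex.exp (sa u * Complex.I)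
  let τ : unitInterval → ℂ := fun u => Complex.exp (ta u * Complex.I)
  have hσ : Continuous σ := by simp only [σ, sa]; fun_prop
  have hτ : Continuous τ := by simp only [τ, ta]; fun_prop
  have hmeetK : ∀ t : ℝ, |t| ≤ θ → dsk (Complex.exp (t * Complex.I)) ∈ circleInterior A := by
    intro t ht
    have h1 := (hθT t ht).1
    exact ⟨hVA ⟨h1, hdc1 t⟩, V, hVo, h1, hVA⟩
  have hγ' : ∀ u, ∃ z : ℂ, (z : OnePoint ℂ) = f 0 (σ u) := fun u => (hθT _ (hsa u)).2
  choose γ hγ using hγ'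
  have hγc : Continuous γ := by
    rw [OnePoint.isOpenEmbedding_coe.isInducing.continuous_iff]
    refine ((hf 0).comp hσ).congr fun u => (hγ u).symm
  have hfσ : ∀ i u, f i (σ u) = γ u := by
    intro i u
    rw [hγ u]
    exact hfA i 0 _ (hmeetK _ (hsa u)).1
  have hinj2 : ∀ i (s : ℝ) u, f i (Complex.exp (s * Complex.I)) = γ u →
      ∃ n : ℤ, s = sa u + n * (2 * Real.pi) := by
    intro i s u h
    rw [← hfσ i u] at h
    have h2 := hinjarc i _ (hmeetK _ (hsa u)) _ (hdc1 s) (hfF i _ _ h)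
    exact exp_eq_helper (hdinj _ _ h2)
  have hinj : Function.Injective γ := by
    intro u v huv
    obtain ⟨n, hn⟩ := hinj2 0 (sa u) v (by rw [← huv]; exact hfσ 0 u)
    have h1 := abs_le.1 (hsa u)
    have h2 := abs_le.1 (hsa v)
    have hn0 : n = 0 := by
      have a1 : (n : ℝ) < 1 := by nlinarith
      have a2 : (-1 : ℝ) < n := by nlinarith
      have a1' : n < 1 := by exact_mod_cast a1
      have a2' : -1 < n := by exact_mod_cast a2
      omega
    rw [hn0] at hn
    simp only [sa, Int.cast_zero, zero_mul, add_zero] at hn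
    have := mul_right_cancel₀ hθ0.ne' hn
    exact Subtype.ext (by linarith)
  have hfτ : ∀ i v u, f i (τ v) = γ u → u = 0 ∨ u = 1 := by
    intro i v u h
    obtain ⟨n, hn⟩ := hinj2 i (ta v) u h
    have v0 := v.2.1
    have v1 := v.2.2
    have u0 := u.2.1
    have u1 := u.2.2
    have b1 : θ ≤ ta v := by
      simp only [ta]
      have : 0 ≤ (v : ℝ) * (2 * Real.pi - 2 * θ) := mul_nonneg v0 (by linarith)
      linarith
    have b2 : ta v ≤ 2 * Real.pi - θ := by
      simp only [ta]
      have : (v : ℝ) * (2 * Real.pi - 2 * θ) ≤ 1 * (2 * Real.pi - 2 * θ) :=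
        mul_le_mul_of_nonneg_right v1 (by linarith)
      linarith
    have h2 := abs_le.1 (hsa u)
    have hn01 : n = 0 ∨ n = 1 := by
      have a1 : (n : ℝ) < 2 := by nlinarith
      have a2 : (-1 : ℝ) < n := by nlinarith
      have a1' : n < 2 := by exact_mod_cast a1
      have a2' : -1 < n := by exact_mod_cast a2
      omega
    rcases hn01 with rfl | rfl
    · right
      simp only [Int.cast_zero, zero_mul, add_zero] at hn
      have h3 : sa u = θ := le_antisymm h2.2 (hn ▸ b1)
      simp only [sa] at h3
      have h4 : (2 * (u : ℝ) - 1) = 1 := by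
        apply mul_right_cancel₀ hθ0.ne'; rw [h3, one_mul]
      exact Subtype.ext (by show (u : ℝ) = 1; linarith)
    · left
      simp only [Int.cast_one, one_mul] at hn
      have h3 : sa u = -θ := le_antisymm (by linarith) h2.1
      simp only [sa] at h3
      have h4 : (2 * (u : ℝ) - 1) = -1 := by
        apply mul_right_cancel₀ hθ0.ne'; rw [h3]; ring
      exact Subtype.ext (by show (u : ℝ) = 0; linarith)
  have h01 : σ 0 = τ 1 := by
    simp only [σ, τ, sa, ta]
    rw [Complex.exp_eq_exp_iff_exists_int]
    refine ⟨-1, ?_⟩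
    simp
    ring
  have h10 : σ 1 = τ 0 := by
    simp only [σ, τ, sa, ta]
    congr 2
    simp
    ring
  let m : unitInterval := ⟨1 / 2, by norm_num, by norm_num⟩
  have hm : γ m = 0 := by
    apply OnePoint.coe_injective
    rw [hγ m, ← hf0]
    simp [σ, sa, m]
  obtain ⟨i, j, hij, U, hUo, hUc, hU0, hUi, hUj⟩ := planar_core f hf σ τ hσ hτ h01 h10 γ hγc hinj m hm
    (fun h => by have := congrArg Subtype.val h; norm_num [m] at this)
    (fun h => by have := congrArg Subtype.val h; norm_num [m] at this) hfσ hfτ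
  have hec : Continuous (fun z : ℂ => (Ψ (z : OnePoint ℂ) : EuclideanSpace ℝ (Fin 3))) :=
    continuous_subtype_val.comp (Ψ.continuous.comp OnePoint.continuous_coe)
  have himg : ∀ i, (∀ z ∈ U, (z : OnePoint ℂ) ∈ range (f i)) →
      (fun z : ℂ => (Ψ (z : OnePoint ℂ) : EuclideanSpace ℝ (Fin 3))) '' U ⊆ F i '' diskS := by
    rintro i h _ ⟨z, hz, rfl⟩
    obtain ⟨w, hw⟩ := h z hz
    refine ⟨dsk w, hdd w, ?_⟩
    simp only [← hw, f, Homeomorph.apply_symm_apply]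
  refine ⟨i, j, hij, (fun z : ℂ => (Ψ (z : OnePoint ℂ) : EuclideanSpace ℝ (Fin 3))) '' U,
    ?_, hUc.image _ hec.continuousOn, ?_, himg i hUi, himg j hUj⟩
  · have hO : IsOpen (Ψ '' (OnePoint.some '' U)) :=
      Ψ.isOpenMap _ (OnePoint.isOpenEmbedding_coe.isOpenMap _ hUo)
    obtain ⟨V', hV', hV'e⟩ := isOpen_induced_iff.1 hO
    refine ⟨V', hV', ?_⟩
    have h1 : (fun z : ℂ => (Ψ (z : OnePoint ℂ) : EuclideanSpace ℝ (Fin 3))) '' U =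
        Subtype.val '' (Ψ '' (OnePoint.some '' U)) := by
      rw [image_image, image_image]
    rw [h1, ← hV'e, Subtype.image_preimage_coe, inter_comm]
    rfl
  · have := image_closure_subset_closure_image hec (mem_image_of_mem _ hU0)
    simpa only [hΨ] using this
end
end

section
/- No branching at carpet points (abstract core of the main theorem): Let T ⊂ ℝ² be the tripod, i.e. the union of the three straight segments joining the origin o to the points (1,0), (−1/2, √3/2), (−1/2, −√3/2). Let (Uᵢ)_{i ∈ ℕ} be a countable family of nonempty open round disks in S² whose closures are pairwise disjoint and whose union is dense in S², and set I* := S² \ ⋃ᵢ Uᵢ. Then there is no continuous map g : T × [0,1] → S² such that g is injective on g⁻¹(I*) and g(o, s) ∈ S² \ ⋃ᵢ closure(Uᵢ) for some s ∈ (0,1). -/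
open Metric Set

noncomputable section

/-- The unit sphere in Euclidean 3-space, as a metric space with the metric induced from ℝ³. -/
abbrev Sph : Type := (Metric.sphere (0 : EuclideanSpace ℝ (Fin 3)) 1 : Set (EuclideanSpace ℝ (Fin 3)))

/-- The tripod `T ⊂ ℝ²`: the union of the three straight segments joining the origin to
`(1,0)`, `(-1/2, √3/2)` and `(-1/2, -√3/2)`. -/
def tripod : Set (ℝ × ℝ) :=
  segment ℝ (0 : ℝ × ℝ) (1, 0) ∪ segment ℝ (0 : ℝ × ℝ) (-(1/2), Real.sqrt 3 / 2) ∪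
    segment ℝ (0 : ℝ × ℝ) (-(1/2), -(Real.sqrt 3 / 2))


lemma ratio_mem_slit {a b : ℂ} (hb : b ≠ 0) (h : ‖a - b‖ < ‖b‖) : a / b ∈ Complex.slitPlane := by
  have : a / b ∈ ball (1:ℂ) 1 := by
    rw [mem_ball, dist_eq_norm]
    have : a / b - 1 = (a - b) / b := by field_simp
    rw [this, norm_div, div_lt_one (norm_pos_iff.2 hb)]
    exact h
  exact Complex.ball_one_subset_slitPlane this

lemma log_ball {E : Type*} [NormedAddCommGroup E] [NormedSpace ℝ E] [ProperSpace E]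
    {R : ℝ} (hR : 0 ≤ R) {F : E → ℂ} (hF : ContinuousOn F (closedBall 0 R))
    (h0 : ∀ x ∈ closedBall (0:E) R, F x ≠ 0) :
    ∃ L : E → ℂ, ContinuousOn L (closedBall 0 R) ∧
      ∀ x ∈ closedBall (0:E) R, Complex.exp (L x) = F x := by
  have hK : IsCompact (closedBall (0:E) R) := isCompact_closedBall _ _
  obtain ⟨x0, hx0, hmin⟩ := hK.exists_isMinOn ⟨0, by simpa using hR⟩ hF.norm
  have hm : 0 < ‖F x0‖ := norm_pos_iff.2 (h0 x0 hx0)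
  have huc := hK.uniformContinuousOn_of_continuous hF
  rw [Metric.uniformContinuousOn_iff] at huc
  obtain ⟨δ, hδ, hd⟩ := huc _ hm
  obtain ⟨n, hn⟩ := exists_nat_gt (R / δ)
  have hn0 : (0:ℝ) < n := lt_of_le_of_lt (by positivity) hn
  have hmem : ∀ k : ℕ, k ≤ n → ∀ x ∈ closedBall (0:E) R,
      ((k:ℝ)/n) • x ∈ closedBall (0:E) R := by
    intro k hk x hx
    rw [mem_closedBall_zero_iff] at hx ⊢
    rw [norm_smul, Real.norm_of_nonneg (by positivity)]
    have : (k:ℝ)/n ≤ 1 := by rw [div_le_one hn0]; exact_mod_cast hk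
    nlinarith [norm_nonneg x]
  have hslit : ∀ k : ℕ, k < n → ∀ x ∈ closedBall (0:E) R,
      F ((((k+1:ℕ):ℝ)/n) • x) / F (((k:ℝ)/n) • x) ∈ Complex.slitPlane := by
    intro k hk x hx
    have h1 := hmem k hk.le x hx
    have h2 := hmem (k+1) hk x hx
    apply ratio_mem_slit (h0 _ h1)
    have := hd _ h2 _ h1 ?_
    · rw [dist_eq_norm] at this
      exact this.trans_le (hmin h1)
    · rw [dist_eq_norm, ← sub_smul, norm_smul]
      have : ((k+1:ℕ):ℝ)/n - (k:ℝ)/n = 1/n := by push_cast; ring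
      rw [this, Real.norm_of_nonneg (by positivity)]
      rw [mem_closedBall_zero_iff] at hx
      rw [div_lt_iff₀ hδ] at hn
      rw [div_mul_eq_mul_div, one_mul, div_lt_iff₀ hn0]
      nlinarith
  have hcont : ∀ k : ℕ, k ≤ n → ContinuousOn (fun x : E => F (((k:ℝ)/n) • x)) (closedBall 0 R) := by
    intro k hk
    exact hF.comp (by fun_prop) (hmem k hk)
  have key : ∀ k : ℕ, k ≤ n → ∃ L : E → ℂ, ContinuousOn L (closedBall 0 R) ∧
      ∀ x ∈ closedBall (0:E) R, Complex.exp (L x) = F (((k:ℝ)/n) • x) := by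
    intro k
    induction k with
    | zero =>
      intro _
      refine ⟨fun _ => Complex.log (F 0), continuousOn_const, fun x hx => ?_⟩
      simp only [Nat.cast_zero, zero_div, zero_smul]
      exact Complex.exp_log (h0 0 (by simpa using hR))
    | succ k ih =>
      intro hk
      obtain ⟨L, hL, hL'⟩ := ih (by omega)
      refine ⟨fun x => L x + Complex.log (F ((((k+1:ℕ):ℝ)/n) • x) / F (((k:ℝ)/n) • x)), ?_, ?_⟩
      · refine hL.add (ContinuousOn.clog ?_ (hslit k hk))
        exact (hcont _ hk).div (hcont _ (by omega)) fun x hx => h0 _ (hmem _ (by omega) x hx)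
      · intro x hx
        have a1 := h0 _ (hmem k (by omega) x hx)
        have a2 := h0 _ (hmem (k+1) hk x hx)
        rw [Complex.exp_add, hL' x hx, Complex.exp_log (div_ne_zero a2 a1)]
        field_simp
  obtain ⟨L, hL, hL'⟩ := key n le_rfl
  refine ⟨L, hL, fun x hx => ?_⟩
  rw [hL' x hx, div_self hn0.ne', one_smul]

lemma no_retract {R : ℝ} (hR : 0 < R) {F : ℂ → ℂ} (hF : ContinuousOn F (closedBall 0 R))
    (h0 : ∀ x ∈ closedBall (0:ℂ) R, F x ≠ 0) (hs : ∀ x ∈ sphere (0:ℂ) R, F x = x) : False := by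
  obtain ⟨L, hL, hL'⟩ := log_ball hR.le hF h0
  have hmem : ∀ t : ℝ, circleMap 0 R t ∈ sphere (0:ℂ) R := fun t => circleMap_mem_sphere _ hR.le t
  let d : ℝ → ℂ := fun t => (L (circleMap 0 R t) - Real.log R - t * Complex.I) / (2 * Real.pi * Complex.I)
  have hd : Continuous d := by
    have : Continuous fun t => L (circleMap 0 R t) :=
      hL.comp_continuous (continuous_circleMap 0 R) fun t => sphere_subset_closedBall (hmem t)
    simp only [d]
    exact ((this.sub continuous_const).sub (Complex.continuous_ofReal.mul continuous_const)).div_const _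
  have hinteger : ∀ t, ∃ n : ℤ, d t = n := by
    intro t
    have h1 : Complex.exp (L (circleMap 0 R t)) = Complex.exp (Real.log R + t * Complex.I) := by
      rw [hL' _ (sphere_subset_closedBall (hmem t)), hs _ (hmem t), Complex.exp_add,
        ← Complex.ofReal_exp, Real.exp_log hR]
      simp [circleMap]
    obtain ⟨n, hn⟩ := Complex.exp_eq_exp_iff_exists_int.1 h1
    refine ⟨n, ?_⟩
    have : (2 * Real.pi * Complex.I : ℂ) ≠ 0 := Complex.two_pi_I_ne_zero
    simp only [d]
    rw [hn]
    field_simp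
    ring
  choose n hn using hinteger
  have hre : Continuous fun t => ((n t : ℤ) : ℝ) := by
    have : (fun t => ((n t : ℤ) : ℝ)) = fun t => (d t).re := by
      funext t; rw [hn]; simp
    rw [this]; exact Complex.continuous_re.comp hd
  have hnc : Continuous n := by
    exact Int.isClosedEmbedding_coe_real.isEmbedding.continuous_iff.2 hre
  have hconst : n 0 = n (2 * Real.pi) := by
    exact PreconnectedSpace.constant inferInstance hnc
  have h1 : d 0 = d (2 * Real.pi) := by rw [hn, hn, hconst]
  have h2 : circleMap 0 R (2 * Real.pi) = circleMap 0 R 0 := by simp [circleMap]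
  simp only [d, h2] at h1
  have : (2 * Real.pi * Complex.I : ℂ) ≠ 0 := Complex.two_pi_I_ne_zero
  rw [div_left_inj' this] at h1
  have h3 : (2 * Real.pi * Complex.I : ℂ) = 0 := by
    push_cast at h1
    linear_combination h1
  exact this h3

/-- maps from a compact subset of the line have logarithms -/
lemma log_of_inj {K : Type} [TopologicalSpace K] [CompactSpace K] [T2Space K]
    {θ : K → ℝ} (hθ : Continuous θ) (hinj : Function.Injective θ) {u : K → ℂ} (hu : Continuous u)
    (h0 : ∀ x, u x ≠ 0) : ∃ L : K → ℂ, Continuous L ∧ ∀ x, Complex.exp (L x) = u x := by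
  rcases isEmpty_or_nonempty K with hE | hE
  · exact ⟨u, hu, fun x => (hE.false x).elim⟩
  have hemb : Topology.IsClosedEmbedding θ := hθ.isClosedEmbedding hinj
  obtain ⟨F, hF⟩ := ContinuousMap.exists_extension' hemb (⟨u, hu⟩ : C(K, ℂ))
  obtain ⟨x0, -, hmin⟩ := isCompact_univ.exists_isMinOn (univ_nonempty (α := K)) hu.norm.continuousOn
  set m := ‖u x0‖ with hmdef
  have hm : 0 < m := norm_pos_iff.2 (h0 x0)
  obtain ⟨R, hR⟩ := (isCompact_range hθ).isBounded.subset_closedBall (0:ℝ)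
  have hR0 : 0 ≤ R := by
    have := hR (mem_range_self x0)
    rw [mem_closedBall] at this
    exact dist_nonneg.trans this
  obtain ⟨G, hG, hGF⟩ : ∃ G : ℝ → ℂ, ContDiff ℝ 1 G ∧ ∀ t ∈ closedBall (0:ℝ) R, ‖G t - F t‖ < m / 4 := by
    have hd := ContinuousMap.dense_setOfPred_contDiff (E := ℝ) (F := ℂ)
    have := hd F
    rw [mem_closure_iff_frequently] at this
    have h2 := (ContinuousMap.tendsto_iff_forall_isCompact_tendstoUniformlyOn
      (F := (id : C(ℝ,ℂ) → C(ℝ,ℂ))) (f := F) (p := nhds F)).1 Filter.tendsto_id _ (isCompact_closedBall (0:ℝ) R)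
    rw [Metric.tendstoUniformlyOn_iff] at h2
    obtain ⟨G, hG1, hG2⟩ := (this.and_eventually (h2 (m/4) (by positivity))).exists
    have hG1' : ContDiff ℝ (⊤ : ℕ∞) G := hG1
    refine ⟨G, hG1'.of_le (by exact_mod_cast le_top), fun t ht => ?_⟩
    have := hG2 t ht
    rwa [dist_comm, dist_eq_norm] at this
  have hdense := hG.dense_compl_range_of_finrank_lt_finrank (by simp)
  obtain ⟨c, hc, hcd⟩ := Metric.dense_iff.1 hdense 0 (m/4) (by positivity)
  have hc' : ‖c‖ < m / 4 := by simpa using hc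
  have hH0 : ∀ t, G t - c ≠ 0 := fun t h => hcd ⟨t, sub_eq_zero.1 h⟩
  obtain ⟨L, hL, hL'⟩ := log_ball (E := ℝ) hR0 (F := fun t => G t - c)
    (hG.continuous.sub continuous_const).continuousOn (fun t _ => hH0 t)
  have hθm : ∀ x, θ x ∈ closedBall (0:ℝ) R := fun x => hR (mem_range_self x)
  have hslit : ∀ x, (G (θ x) - c) / u x ∈ Complex.slitPlane := by
    intro x
    apply ratio_mem_slit (h0 x)
    have h1 := hGF _ (hθm x)
    have h2 : F (θ x) = u x := congrFun hF x
    rw [h2] at h1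
    have h3 : m ≤ ‖u x‖ := hmin (mem_univ x)
    calc ‖G (θ x) - c - u x‖ = ‖(G (θ x) - u x) - c‖ := by congr 1; ring
      _ ≤ ‖G (θ x) - u x‖ + ‖c‖ := norm_sub_le _ _
      _ < ‖u x‖ := by linarith
  refine ⟨fun x => L (θ x) - Complex.log ((G (θ x) - c) / u x), ?_, ?_⟩
  · refine (hL.comp_continuous hθ hθm).sub (Continuous.clog ?_ hslit)
    exact ((hG.continuous.comp hθ).sub continuous_const).div hu h0
  · intro x
    have := h0 x
    have h2 := hH0 (θ x)
    rw [Complex.exp_sub, hL' _ (hθm x), Complex.exp_log (div_ne_zero h2 this)]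
    field_simp

/-- the separation lemma -/
lemma covers {X : Type} [TopologicalSpace X] {R : ℝ} (hR : 0 < R) {G : ℂ → X}
    (hG : Continuous G) {W : Set X} (hW : IsOpen W) (h0 : G 0 ∈ W)
    (hs : ∀ z ∈ sphere (0:ℂ) R, G z ∉ W)
    (hinj : InjOn G (closedBall 0 R ∩ G ⁻¹' frontier W))
    {π : X → ℂ} (hπ : ContinuousOn π (frontier W)) (hπi : InjOn π (frontier W))
    {r : ℝ} (hr : 0 < r) (hπm : MapsTo π (frontier W) (sphere 0 r)) :
    frontier W ⊆ G '' closedBall 0 R := by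
  intro q hq
  by_contra hqn
  set B := closedBall (0:ℂ) R with hB
  set K : Set ℂ := B ∩ G ⁻¹' frontier W with hKdef
  have hKc : IsClosed K := isClosed_closedBall.inter (isClosed_frontier.preimage hG)
  have hKcomp : IsCompact K := (isCompact_closedBall (0:ℂ) R).of_isClosed_subset hKc inter_subset_left
  have : CompactSpace K := isCompact_iff_compactSpace.1 hKcomp
  have hrn : ∀ y ∈ frontier W, ‖π y‖ = r := fun y hy => by simpa using hπm hy
  have hq0 : π q ≠ 0 := by
    intro h; have := hrn q hq; rw [h] at this; simp at this; linarith
  let v : K → ℂ := fun x => -(π (G x) / π q)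
  have hpg : Continuous fun x : K => π (G x) := by
    have : ContinuousOn (fun z => π (G z)) K :=
      hπ.comp (hG.continuousOn) (fun z hz => hz.2)
    exact continuousOn_iff_continuous_domRestrict.1 this
  have hv : Continuous v := (hpg.div_const _).neg
  have hvn : ∀ x, ‖v x‖ = 1 := by
    intro x
    simp only [v, norm_neg, norm_div]
    rw [hrn _ x.2.2, hrn q hq, div_self hr.ne']
  have hvs : ∀ x, v x ∈ Complex.slitPlane := by
    intro x
    rw [Complex.mem_slitPlane_iff_arg]
    refine ⟨fun h => ?_, fun h => ?_⟩
    · have h1 := Complex.norm_mul_exp_arg_mul_I (v x)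
      rw [h, hvn x] at h1
      simp [Complex.exp_pi_mul_I] at h1
      simp only [v, neg_inj] at h1
      have h2 : π (G x) = π q := by
        rw [eq_comm, div_eq_one_iff_eq hq0] at h1; exact h1
      have := hπi x.2.2 hq h2
      exact hqn ⟨x, x.2.1, this⟩
    · have := hvn x; rw [h] at this; simp at this
  have hθ : Continuous fun x => Complex.arg (v x) := by
    rw [continuous_iff_continuousAt]
    intro x
    exact (Complex.continuousAt_arg (hvs x)).comp hv.continuousAt
  have hθi : Function.Injective fun x => Complex.arg (v x) := by
    intro x y hxy
    have : v x = v y := Complex.ext_norm_arg (by rw [hvn, hvn]) hxy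
    simp only [v, neg_inj] at this
    have h2 : π (G x) = π (G y) := by
      rwa [div_left_inj' hq0] at this
    exact Subtype.ext (hinj x.2 y.2 (hπi x.2.2 y.2.2 h2))
  obtain ⟨L, hL, hL'⟩ := log_of_inj hθ hθi (u := fun x : K => (x:ℂ)) continuous_subtype_val (by
    intro x hx
    have := x.2.2
    simp only [hx, mem_preimage] at this
    rw [hW.frontier_eq] at this
    exact this.2 h0)
  obtain ⟨M, hM⟩ := ContinuousMap.exists_extension' hKc.isClosedEmbedding_subtypeVal (⟨L, hL⟩ : C(K, ℂ))
  classical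
  have hfr : ∀ z ∈ B ∩ frontier (G ⁻¹' W), z ∈ K := fun z hz =>
    ⟨hz.1, hG.frontier_preimage_subset W hz.2⟩
  have hexp : ∀ z ∈ K, Complex.exp (M z) = z := by
    intro z hz
    have h1 : M z = L ⟨z, hz⟩ := congrFun hM ⟨z, hz⟩
    rw [h1, hL']
  refine no_retract hR (F := (G ⁻¹' W).piecewise (fun z => Complex.exp (M z)) id) ?_ ?_ ?_
  · refine ContinuousOn.piecewise (fun z hz => ?_) ?_ ?_
    · exact hexp z (hfr z hz)
    · exact (Complex.continuous_exp.comp M.continuous).continuousOn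
    · exact continuousOn_id
  · intro z hz
    by_cases hzW : z ∈ G ⁻¹' W
    · rw [piecewise_eq_of_mem _ _ _ hzW]; exact Complex.exp_ne_zero _
    · rw [piecewise_eq_of_notMem _ _ _ hzW]
      rintro rfl
      exact hzW h0
  · intro z hz
    have hz' : z ∉ G ⁻¹' W := hs z hz
    rw [piecewise_eq_of_notMem _ _ _ hz']; rfl

lemma exists_radial {r : ℝ} {a : ℂ} (ha : ‖a‖ < r) :
    ∃ P : ℂ → ℂ, ContinuousOn P {w | r ≤ ‖w‖} ∧ ∀ w, r ≤ ‖w‖ → ‖P w‖ = r ∧ (‖w‖ = r → P w = w) ∧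
      ∃ t : ℝ, 0 < t ∧ t ≤ 1 ∧ P w = a + t • (w - a) ∧ (r < ‖w‖ → t < 1) := by
  set s : Set ℂ := ball (-a) r with hs
  have hsn : s ∈ nhds (0:ℂ) := isOpen_ball.mem_nhds (by simpa [hs, mem_ball, dist_eq_norm] using ha)
  have hsc : Convex ℝ s := convex_ball _ _
  have hmem : ∀ w, w - a ∈ s ↔ ‖w‖ < r := fun w => by simp [hs, mem_ball, dist_eq_norm]
  have hr : 0 < r := (norm_nonneg a).trans_lt ha
  have hfront : ∀ w, w - a ∈ frontier s ↔ ‖w‖ = r := fun w => by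
    rw [hs, frontier_ball _ hr.ne']; simp [dist_eq_norm]
  have hg1 : ∀ w, gauge s (w - a) = 1 ↔ ‖w‖ = r := fun w => by
    rw [gauge_eq_one_iff_mem_frontier hsc hsn, hfront]
  have hglt : ∀ w, gauge s (w - a) < 1 ↔ ‖w‖ < r := fun w => by
    rw [gauge_lt_one_iff_mem_interior hsc hsn, isOpen_ball.interior_eq, hmem]
  have hge : ∀ w, r ≤ ‖w‖ → 1 ≤ gauge s (w - a) := fun w hw => by
    by_contra h
    exact absurd ((hglt w).1 (not_le.1 h)) (not_lt.2 hw)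
  have hgc : Continuous (gauge s) := continuous_gauge hsc hsn
  refine ⟨fun w => a + (gauge s (w - a))⁻¹ • (w - a), ?_, fun w hw => ⟨?_, ?_, (gauge s (w - a))⁻¹, ?_, ?_, rfl, ?_⟩⟩
  · refine continuousOn_const.add (ContinuousOn.smul (f := fun w => (gauge s (w - a))⁻¹) (ContinuousOn.inv₀ (f := fun w => gauge s (w - a)) ?_ ?_) ?_)
    · exact (hgc.comp (continuous_id.sub continuous_const)).continuousOn
    · intro w hw
      have := hge w hw; positivity
    · exact (continuous_id.sub continuous_const).continuousOn
  · have h1 := hge w hw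
    rw [← hg1]
    simp only [add_sub_cancel_left]
    rw [gauge_smul_of_nonneg (by positivity), smul_eq_mul, inv_mul_cancel₀ (by positivity)]
  · intro h
    simp only [(hg1 w).2 h, inv_one, one_smul]; ring
  · have := hge w hw; positivity
  · exact inv_le_one_of_one_le₀ (hge w hw)
  · intro h
    have h1 := hge w hw
    have h2 : 1 < gauge s (w - a) := lt_of_le_of_ne h1 (fun h3 => h.ne' ((hg1 w).1 h3.symm))
    exact inv_lt_one_of_one_lt₀ h2

lemma planar {V : ℕ → Set ℂ} {r : ℝ} (hr : 0 < r) (hopen : ∀ i, IsOpen (V i))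
    (hdisj : ∀ i j, i ≠ j → Disjoint (closure (V i)) (closure (V j)))
    (hconv : ∀ i, (V i ∩ closedBall 0 r).Nonempty → Convex ℝ (V i))
    (hfin : ∀ ε > 0, {i | (V i ∩ closedBall 0 r).Nonempty ∧
      ∃ x ∈ V i, ∃ y ∈ V i, ε ≤ dist x y}.Finite) {W : Set ℂ}
    (hWdef : W = ball 0 r ∪ ⋃ i ∈ {i | (V i ∩ sphere 0 r).Nonempty}, V i) :
    (∀ j, ∀ w ∈ frontier W, w ∉ V j) ∧ ∃ π : ℂ → ℂ, ContinuousOn π (frontier W) ∧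
      InjOn π (frontier W) ∧ MapsTo π (frontier W) (sphere 0 r) := by
  have hWo : IsOpen W := by
    rw [hWdef]
    exact isOpen_ball.union (isOpen_biUnion fun i _ => hopen i)
  have hVd : ∀ i j w, w ∈ V i → w ∈ closure (V j) → i = j := by
    intro i j w h1 h2
    by_contra h
    exact (hdisj i j h).le_bot ⟨subset_closure h1, h2⟩
  have hcd : ∀ i j w, w ∈ closure (V i) → w ∈ closure (V j) → i = j := by
    intro i j w h1 h2
    by_contra h
    exact (hdisj i j h).le_bot ⟨h1, h2⟩
  have hIc : ∀ i, (V i ∩ sphere 0 r).Nonempty → (V i ∩ closedBall 0 r).Nonempty := fun i h =>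
    h.mono (inter_subset_inter_right _ sphere_subset_closedBall)
  have hVW : ∀ i, (V i ∩ sphere 0 r).Nonempty → V i ⊆ W := by
    intro i hi x hx
    rw [hWdef]; right
    exact mem_biUnion hi hx
  have hfr : ∀ w ∈ frontier W, w ∈ closure W ∧ w ∉ W := fun w hw => by
    rw [hWo.frontier_eq] at hw; exact hw
  have hfn : ∀ w ∈ frontier W, r ≤ ‖w‖ := by
    intro w hw
    by_contra h
    apply (hfr w hw).2
    rw [hWdef]; left
    simpa using h
  refine ⟨?_, ?_⟩
  · intro j w hw hwj
    obtain ⟨hcl, hnW⟩ := hfr w hw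
    by_cases h1 : (V j ∩ sphere 0 r).Nonempty
    · exact hnW (hVW j h1 hwj)
    obtain ⟨y, hyj, hyW⟩ := mem_closure_iff.1 hcl _ (hopen j) hwj
    rw [hWdef] at hyW
    rcases hyW with hyW | hyW
    · have hcv := hconv j ⟨y, hyj, ball_subset_closedBall hyW⟩
      have hy : ‖y‖ < r := by simpa using hyW
      have : r ∈ norm '' V j := by
        have hc : IsPreconnected (norm '' V j) := hcv.isPreconnected.image _ continuous_norm.continuousOn
        exact hc.Icc_subset ⟨y, hyj, rfl⟩ ⟨w, hwj, rfl⟩ ⟨hy.le, hfn w hw⟩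
      obtain ⟨z, hz, hzr⟩ := this
      exact h1 ⟨z, hz, by simpa using hzr⟩
    · simp only [mem_iUnion] at hyW
      obtain ⟨i, hi, hyi⟩ := hyW
      have := hVd i j y hyi (subset_closure hyj)
      subst this
      exact h1 hi
  -- centers
  have hA : ∀ i, ∃ a : ℂ, (V i ∩ sphere 0 r).Nonempty → a ∈ V i ∧ ‖a‖ < r := by
    intro i
    by_cases h : (V i ∩ sphere 0 r).Nonempty
    · obtain ⟨x, hx, hxs⟩ := h
      have : x ∈ closure (ball (0:ℂ) r) := by
        rw [closure_ball _ hr.ne']; exact sphere_subset_closedBall hxs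
      obtain ⟨a, ha, ha'⟩ := mem_closure_iff.1 this _ (hopen i) hx
      exact ⟨a, fun _ => ⟨ha, by simpa using ha'⟩⟩
    · exact ⟨0, fun h' => absurd h' h⟩
  choose a ha using hA
  have hP : ∀ i, ∃ P : ℂ → ℂ, (V i ∩ sphere 0 r).Nonempty → ContinuousOn P {w | r ≤ ‖w‖} ∧
      ∀ w, r ≤ ‖w‖ → ‖P w‖ = r ∧ (‖w‖ = r → P w = w) ∧
      ∃ t : ℝ, 0 < t ∧ t ≤ 1 ∧ P w = a i + t • (w - a i) ∧ (r < ‖w‖ → t < 1) := by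
    intro i
    by_cases h : (V i ∩ sphere 0 r).Nonempty
    · obtain ⟨P, hP⟩ := exists_radial (ha i h).2
      exact ⟨P, fun _ => hP⟩
    · exact ⟨id, fun h' => absurd h' h⟩
  choose P hP using hP
  classical
  let π : ℂ → ℂ := fun w => if h : ∃ i, (V i ∩ sphere 0 r).Nonempty ∧ w ∈ closure (V i)
    then P h.choose w else w
  have hπ1 : ∀ i w, (V i ∩ sphere 0 r).Nonempty → w ∈ closure (V i) → π w = P i w := by
    intro i w hi hw
    have h : ∃ i, (V i ∩ sphere 0 r).Nonempty ∧ w ∈ closure (V i) := ⟨i, hi, hw⟩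
    have h2 : h.choose = i := hcd _ _ w h.choose_spec.2 hw
    simp only [π]
    rw [dif_pos h, h2]
  have hπ2 : ∀ w, (¬ ∃ i, (V i ∩ sphere 0 r).Nonempty ∧ w ∈ closure (V i)) → π w = w := by
    intro w h
    simp only [π]
    rw [dif_neg h]
  have hπ3 : ∀ w, ‖w‖ = r → π w = w := by
    intro w hw
    by_cases h : ∃ i, (V i ∩ sphere 0 r).Nonempty ∧ w ∈ closure (V i)
    · obtain ⟨i, hi, hwi⟩ := h
      rw [hπ1 i w hi hwi]
      exact ((hP i hi).2 w hw.ge).2.1 hw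
    · exact hπ2 w h
  -- outer points
  have hout : ∀ w, r < ‖w‖ → ∃ F : Set ℕ, F.Finite ∧ (∀ i ∈ F, (V i ∩ sphere 0 r).Nonempty) ∧
      ∃ ε > 0, ∀ w' ∈ W, dist w' w < ε → ∃ i ∈ F, w' ∈ V i := by
    intro w hw
    set ε := (‖w‖ - r) / 2 with hε
    have hε0 : 0 < ε := by rw [hε]; linarith
    refine ⟨{i | (V i ∩ sphere 0 r).Nonempty ∧ ∃ x ∈ V i, ∃ y ∈ V i, ε ≤ dist x y},
      (hfin ε hε0).subset fun i hi => ⟨hIc i hi.1, hi.2⟩, fun i hi => hi.1, ε, hε0, ?_⟩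
    intro w' hw' hd
    have hn : r + ε < ‖w'‖ := by
      have h1 : ‖w‖ - ‖w'‖ ≤ ‖w - w'‖ := norm_sub_norm_le _ _
      rw [dist_comm, dist_eq_norm] at hd
      linarith
    rw [hWdef] at hw'
    rcases hw' with hw' | hw'
    · have : ‖w'‖ < r := by simpa using hw'
      linarith
    · simp only [mem_iUnion] at hw'
      obtain ⟨i, hi, hwi⟩ := hw'
      have hi' : (V i ∩ sphere 0 r).Nonempty := hi
      obtain ⟨x, hx, hxs⟩ := hi'
      refine ⟨i, ⟨hi, w', hwi, x, hx, ?_⟩, hwi⟩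
      have hxn : ‖x‖ = r := by simpa using hxs
      have h1 : ‖w'‖ - ‖x‖ ≤ ‖w' - x‖ := norm_sub_norm_le _ _
      rw [dist_eq_norm]; linarith
  have houtF : ∀ w, r < ‖w‖ → ∃ F : Set ℕ, F.Finite ∧ (∀ i ∈ F, (V i ∩ sphere 0 r).Nonempty) ∧
      ∀ᶠ w' in nhds w, w' ∈ closure W → ∃ i ∈ F, w' ∈ closure (V i) := by
    intro w hw
    obtain ⟨F, hF, hFI, ε, hε, h⟩ := hout w hw
    refine ⟨F, hF, hFI, ?_⟩
    filter_upwards [ball_mem_nhds w hε] with w' hw' hcl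
    have h1 : w' ∈ closure (⋃ i ∈ F, V i) := by
      rw [_root_.mem_closure_iff]
      intro o ho hwo
      obtain ⟨y, ⟨hyo, hyb⟩, hyW⟩ := mem_closure_iff.1 hcl _ (ho.inter isOpen_ball) ⟨hwo, hw'⟩
      obtain ⟨i, hi, hyi⟩ := h y hyW hyb
      exact ⟨y, hyo, mem_biUnion hi hyi⟩
    rw [hF.closure_biUnion] at h1
    simpa using h1
  have hoc : ∀ w ∈ frontier W, r < ‖w‖ → ∃ i, (V i ∩ sphere 0 r).Nonempty ∧ w ∈ closure (V i) := by
    intro w hw hn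
    obtain ⟨F, hF, hFI, h⟩ := houtF w hn
    obtain ⟨i, hi, hwi⟩ := h.self_of_nhds (hfr w hw).1
    exact ⟨i, hFI i hi, hwi⟩
  -- open segments
  have hseg : ∀ i, (V i ∩ sphere 0 r).Nonempty → ∀ w ∈ closure (V i), ∀ t : ℝ, 0 < t → t < 1 →
      a i + t • (w - a i) ∈ V i := by
    intro i hi w hw t ht0 ht1
    have h1 := (hconv i (hIc i hi)).openSegment_interior_closure_subset_interior
      (x := a i) (y := w) (by rw [(hopen i).interior_eq]; exact (ha i hi).1) hw
    rw [(hopen i).interior_eq] at h1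
    apply h1
    exact ⟨1 - t, t, by linarith, ht0, by ring, by simp only [smul_sub, sub_smul, one_smul]; ring⟩
  have hπV : ∀ i, (V i ∩ sphere 0 r).Nonempty → ∀ w ∈ closure (V i), r < ‖w‖ → π w ∈ V i := by
    intro i hi w hw hn
    rw [hπ1 i w hi hw]
    obtain ⟨-, -, t, h0, h1, h2, h3⟩ := (hP i hi).2 w hn.le
    rw [h2]
    exact hseg i hi w hw t h0 (h3 hn)
  refine ⟨π, ?_, ?_, ?_⟩
  · -- continuity
    intro w hw
    rcases (hfn w hw).lt_or_eq with hn | hn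
    · obtain ⟨i, hi, hwi⟩ := hoc w hw hn
      obtain ⟨F, hF, hFI, hev⟩ := houtF w hn
      have hcont : ContinuousWithinAt (P i) (frontier W) w :=
        ((hP i hi).1 w hn.le).mono hfn
      refine hcont.congr_of_eventuallyEq ?_ (hπ1 i w hi hwi)
      have hne : ∀ᶠ w' in nhds w, ∀ j ∈ F \ {i}, w' ∉ closure (V j) := by
        rw [Filter.eventually_all_finite (hF.subset sdiff_subset)]
        intro j hj
        apply isClosed_closure.isOpen_compl.mem_nhds
        intro hwj
        exact hj.2 (hcd j i w hwj hwi)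
      rw [Filter.EventuallyEq, eventually_nhdsWithin_iff]
      filter_upwards [hev, hne] with w' h1 h2 h3
      obtain ⟨j, hj, hwj⟩ := h1 (hfr w' h3).1
      by_cases hji : j = i
      · subst hji
        exact hπ1 j w' hi hwj
      · exact absurd hwj (h2 j ⟨hj, hji⟩)
    · rw [ContinuousWithinAt, hπ3 w hn.symm, Metric.tendsto_nhds]
      intro ε hε
      have hFf := (hfin (ε/3) (by positivity))
      set F := {i | (V i ∩ closedBall 0 r).Nonempty ∧ ∃ x ∈ V i, ∃ y ∈ V i, ε / 3 ≤ dist x y} with hFdef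
      have hne : ∀ᶠ w' in nhdsWithin w (frontier W), ∀ j ∈ F, (V j ∩ sphere 0 r).Nonempty →
          w' ∈ closure (V j) → dist (P j w') w < ε := by
        rw [Filter.eventually_all_finite hFf]
        intro j hj
        by_cases hjI : (V j ∩ sphere 0 r).Nonempty
        · have hcont : ContinuousWithinAt (P j) (frontier W) w := ((hP j hjI).1 w hn.le).mono hfn
          have h1 := Metric.tendsto_nhds.1 hcont ε hε
          filter_upwards [h1] with w' h2 _ _
          rwa [((hP j hjI).2 w hn.le).2.1 hn.symm] at h2
        · exact Filter.Eventually.of_forall fun w' h => absurd h hjI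
      have hself : ∀ᶠ w' in nhdsWithin w (frontier W), w' ∈ frontier W := self_mem_nhdsWithin
      have hb : ∀ᶠ w' in nhdsWithin w (frontier W), dist w' w < ε / 3 :=
        mem_nhdsWithin_of_mem_nhds (ball_mem_nhds w (by positivity))
      filter_upwards [hne, hself, hb] with w' h1 h2 h3
      by_cases hw' : ‖w'‖ = r
      · rw [hπ3 w' hw']; linarith
      have hn' : r < ‖w'‖ := lt_of_le_of_ne (hfn w' h2) (Ne.symm hw')
      obtain ⟨j, hj, hwj⟩ := hoc w' h2 hn'
      by_cases hjF : j ∈ F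
      · rw [hπ1 j w' hj hwj]
        exact h1 j hjF hj hwj
      · have h4 : π w' ∈ V j := hπV j hj w' hwj hn'
        have h5 : ∀ x ∈ V j, dist x (π w') ≤ ε / 3 := by
          intro x hx
          by_contra hcon
          exact hjF ⟨hIc j hj, x, hx, π w', h4, (not_le.1 hcon).le⟩
        have h6 : closure (V j) ⊆ closedBall (π w') (ε/3) :=
          closure_minimal h5 isClosed_closedBall
        have h7 : dist w' (π w') ≤ ε / 3 := h6 hwj
        have h8 := dist_triangle (π w') w' w
        rw [dist_comm] at h7
        linarith
  · -- injectivity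
    have key : ∀ w ∈ frontier W, ∀ w' ∈ frontier W, r < ‖w‖ → π w = π w' → w = w' := by
      intro w hw w' hw' hn he
      obtain ⟨i, hi, hwi⟩ := hoc w hw hn
      have h1 : π w ∈ V i := hπV i hi w hwi hn
      rcases (hfn w' hw').lt_or_eq with hn' | hn'
      · obtain ⟨j, hj, hwj⟩ := hoc w' hw' hn'
        have h2 : π w' ∈ V j := hπV j hj w' hwj hn'
        have hij : i = j := hVd i j (π w) h1 (subset_closure (he ▸ h2))
        subst hij
        obtain ⟨-, -, t, t0, t1, h3, -⟩ := (hP i hi).2 w hn.le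
        obtain ⟨-, -, t', t0', t1', h3', -⟩ := (hP i hi).2 w' hn'.le
        rw [hπ1 i w hi hwi, hπ1 i w' hi hwj, h3, h3'] at he
        have he2 : t • (w - a i) = t' • (w' - a i) := add_left_cancel he
        rcases lt_trichotomy t t' with h | h | h
        · exfalso
          apply (hfr w' hw').2
          apply hVW i hi
          have := hseg i hi w hwi (t / t') (by positivity) (by rwa [div_lt_one t0'])
          have h5 : (t / t') • (w - a i) = w' - a i := by
            rw [div_eq_inv_mul, mul_smul, he2, smul_smul, inv_mul_cancel₀ t0'.ne', one_smul]
          rw [h5] at this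
          simpa using this
        · subst h
          have := smul_right_injective ℂ t0.ne' he2
          simpa using this
        · exfalso
          apply (hfr w hw).2
          apply hVW i hi
          have := hseg i hi w' hwj (t' / t) (by positivity) (by rwa [div_lt_one t0])
          have h5 : (t' / t) • (w' - a i) = w - a i := by
            rw [div_eq_inv_mul, mul_smul, ← he2, smul_smul, inv_mul_cancel₀ t0.ne', one_smul]
          rw [h5] at this
          simpa using this
      · exfalso
        rw [he, hπ3 w' hn'.symm] at h1
        exact (hfr w' hw').2 (hVW i hi h1)
    intro w hw w' hw' he
    rcases (hfn w hw).lt_or_eq with hn | hn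
    · exact key w hw w' hw' hn he
    rcases (hfn w' hw').lt_or_eq with hn' | hn'
    · exact (key w' hw' w hw hn' he.symm).symm
    · rwa [hπ3 w hn.symm, hπ3 w' hn'.symm] at he
  · intro w hw
    rw [mem_sphere_zero_iff_norm]
    by_cases h : ∃ i, (V i ∩ sphere 0 r).Nonempty ∧ w ∈ closure (V i)
    · obtain ⟨i, hi, hwi⟩ := h
      rw [hπ1 i w hi hwi]
      exact ((hP i hi).2 w (hfn w hw)).1
    · rcases (hfn w hw).lt_or_eq with hn | hn
      · exact absurd (hoc w hw hn) h
      · rw [hπ2 w h, hn]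

open scoped RealInnerProductSpace

lemma chart (p : Sph) : ∃ Φ : ℂ → Sph, Φ 0 = p ∧ Topology.IsOpenEmbedding Φ ∧
    ∀ (c : Sph) (ρ : ℝ), 0 < ρ → ρ ≤ 1 → Convex ℝ (Φ ⁻¹' ball c ρ) := by
  let E := EuclideanSpace ℝ (Fin 3)
  have hnorm : ∀ y : Sph, ‖(y : E)‖ = 1 := fun y => by simpa using y.2
  have hp0 : (p : E) ≠ 0 := by
    intro h; have := hnorm p; rw [h] at this; simp at this
  have : Fact (Module.finrank ℝ E = 2 + 1) := ⟨by simp [E]⟩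
  let e : ℂ ≃ₗᵢ[ℝ] (ℝ ∙ (p : E))ᗮ :=
    Complex.orthonormalBasisOneI.equiv (OrthonormalBasis.fromOrthogonalSpanSingleton 2 hp0) (Equiv.refl _)
  let v : ℂ → E := fun z => p + (e z : E)
  have hvc : Continuous v := continuous_const.add (continuous_subtype_val.comp e.continuous)
  have hpe : ∀ z, ⟪(p : E), (e z : E)⟫ = 0 := fun z =>
    Submodule.mem_orthogonal_singleton_iff_inner_right.1 (e z).2
  have hpp : ⟪(p : E), (p : E)⟫ = 1 := by rw [real_inner_self_eq_norm_sq, hnorm]; norm_num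
  have hpv : ∀ z, ⟪(p : E), v z⟫ = 1 := fun z => by
    simp only [v]; rw [inner_add_right, hpe, hpp, add_zero]
  have hv0 : ∀ z, v z ≠ 0 := fun z h => by
    have := hpv z; rw [h, inner_zero_right] at this; norm_num at this
  have hvn : ∀ z, 0 < ‖v z‖ := fun z => norm_pos_iff.2 (hv0 z)
  let Φ : ℂ → Sph := fun z => ⟨‖v z‖⁻¹ • v z, by
    rw [mem_sphere_zero_iff_norm, norm_smul, norm_inv, norm_norm, inv_mul_cancel₀ (hvn z).ne']⟩
  have hΦc : Continuous Φ := by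
    refine Continuous.subtype_mk ?_ _
    exact (hvc.norm.inv₀ fun z => (hvn z).ne').smul hvc
  have hpΦ : ∀ z, ⟪(p : E), (Φ z : E)⟫ = ‖v z‖⁻¹ := fun z => by
    simp only [Φ]
    rw [inner_smul_right, hpv, mul_one]
  let ψ : Sph → ℂ := fun y =>
    e.symm ((ℝ ∙ (p : E))ᗮ.orthogonalProjectionOnto ((⟪(p : E), (y : E)⟫)⁻¹ • (y : E) - p))
  have hψΦ : ∀ z, ψ (Φ z) = z := by
    intro z
    simp only [ψ]
    rw [hpΦ, inv_inv]
    simp only [Φ]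
    rw [smul_smul, mul_inv_cancel₀ (hvn z).ne', one_smul]
    simp only [v, add_sub_cancel_left]
    rw [Submodule.orthogonalProjectionOnto_mem_subspace_eq_self]
    simp
  have hΦψ : ∀ y : Sph, 0 < ⟪(p : E), (y : E)⟫ → Φ (ψ y) = y := by
    intro y hy
    have hmem : (⟪(p : E), (y : E)⟫)⁻¹ • (y : E) - p ∈ (ℝ ∙ (p : E))ᗮ := by
      rw [Submodule.mem_orthogonal_singleton_iff_inner_right, inner_sub_right, inner_smul_right,
        inv_mul_cancel₀ hy.ne', hpp, sub_self]
    have h1 : v (ψ y) = (⟪(p : E), (y : E)⟫)⁻¹ • (y : E) := by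
      simp only [v, ψ, LinearIsometryEquiv.apply_symm_apply]
      have := Submodule.orthogonalProjectionOnto_mem_subspace_eq_self
        (K := (ℝ ∙ (p : E))ᗮ) ⟨_, hmem⟩
      simp only at this
      rw [this]
      simp
    apply Subtype.ext
    simp only [Φ]
    rw [h1, norm_smul, hnorm, mul_one, norm_inv, Real.norm_of_nonneg hy.le, inv_inv, smul_smul,
      mul_inv_cancel₀ hy.ne', one_smul]
  have hψc : ContinuousOn ψ {y | 0 < ⟪(p : E), (y : E)⟫} := by
    have h1 : ContinuousOn (fun y : Sph => (⟪(p : E), (y : E)⟫)⁻¹ • (y : E) - (p : E))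
        {y | 0 < ⟪(p : E), (y : E)⟫} := by
      refine ContinuousOn.sub (ContinuousOn.smul (f := fun y : Sph => (⟪(p : E), (y : E)⟫)⁻¹)
        (ContinuousOn.inv₀ (f := fun y : Sph => ⟪(p : E), (y : E)⟫) ?_ ?_) ?_) continuousOn_const
      · exact (continuous_const.inner continuous_subtype_val).continuousOn
      · intro y hy; exact ne_of_gt hy
      · exact continuous_subtype_val.continuousOn
    exact (e.symm.continuous.comp (ContinuousLinearMap.continuous _)).comp_continuousOn h1
  have hHo : IsOpen {y : Sph | 0 < ⟪(p : E), (y : E)⟫} :=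
    isOpen_lt continuous_const (continuous_const.inner continuous_subtype_val)
  refine ⟨Φ, ?_, ?_, ?_⟩
  · apply Subtype.ext
    simp only [Φ, v, map_zero, ZeroMemClass.coe_zero, add_zero, hnorm, inv_one, one_smul]
  · refine Topology.IsOpenEmbedding.of_continuous_injective_isOpenMap hΦc
      (Function.LeftInverse.injective hψΦ) ?_
    intro O hO
    have : Φ '' O = {y : Sph | 0 < ⟪(p : E), (y : E)⟫} ∩ ψ ⁻¹' O := by
      ext y
      constructor
      · rintro ⟨z, hz, rfl⟩
        refine ⟨?_, ?_⟩
        · simp only [mem_ofPred_eq]; rw [hpΦ]; exact inv_pos.2 (hvn z)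
        · simp only [mem_preimage]; rwa [hψΦ]
      · rintro ⟨h1, h2⟩
        exact ⟨ψ y, h2, hΦψ y h1⟩
    rw [this]
    exact hψc.isOpen_inter_preimage hHo hO
  · intro c ρ hρ0 hρ
    have : Φ ⁻¹' ball c ρ = {z | z ∈ univ ∧ (1 - ρ ^ 2 / 2) * ‖v z‖ - ⟪(c : E), v z⟫ < 0} := by
      ext z
      have h2 : dist (Φ z) c ^ 2 = 2 - 2 * (‖v z‖⁻¹ * ⟪(c : E), v z⟫) := by
        rw [Subtype.dist_eq, dist_eq_norm, norm_sub_sq_real, hnorm, hnorm, real_inner_comm]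
        simp only [Φ]
        rw [inner_smul_right]; ring
      have hv := hvn z
      have h3 : ‖v z‖⁻¹ * ⟪(c : E), v z⟫ * ‖v z‖ = ⟪(c : E), v z⟫ := by field_simp
      simp only [mem_preimage, mem_ball, mem_univ, true_and, mem_ofPred_eq]
      rw [← sq_lt_sq₀ dist_nonneg hρ0.le, h2]
      constructor
      · intro h; nlinarith
      · intro h
        by_contra hcon
        nlinarith
    rw [this]
    apply ConvexOn.convex_lt
    have hvaff : ∀ (z w : ℂ) (s t : ℝ), s + t = 1 → v (s • z + t • w) = s • v z + t • v w := by
      intro z w s t hst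
      simp only [v, map_add, map_smul, Submodule.coe_add, Submodule.coe_smul, smul_add]
      have : (p : E) = s • (p : E) + t • (p : E) := by rw [← add_smul, hst, one_smul]
      nth_rewrite 1 [this]
      abel
    refine ⟨convex_univ, fun z _ w _ s t hs ht hst => ?_⟩
    beta_reduce
    rw [hvaff z w s t hst, inner_add_right, inner_smul_right, inner_smul_right]
    have h1 : ‖s • v z + t • v w‖ ≤ s * ‖v z‖ + t * ‖v w‖ := by
      refine (norm_add_le _ _).trans ?_
      rw [norm_smul, norm_smul, Real.norm_of_nonneg hs, Real.norm_of_nonneg ht]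
    have h2 : 0 ≤ 1 - ρ ^ 2 / 2 := by nlinarith
    have := mul_le_mul_of_nonneg_left h1 h2
    simp only [smul_eq_mul]
    linarith

lemma finite_large {c : ℕ → Sph} {r : ℕ → ℝ}
    (hdisj : ∀ i j, i ≠ j → Disjoint (closure (ball (c i) (r i))) (closure (ball (c j) (r j))))
    {ε : ℝ} (hε : 0 < ε) : {i | ε ≤ r i}.Finite := by
  by_contra hinf
  have hinf : {i | ε ≤ r i}.Infinite := hinf
  have hsep : ∀ i ∈ {i | ε ≤ r i}, ∀ j ∈ {i | ε ≤ r i}, dist (c i) (c j) < ε → i = j := by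
    intro i hi j hj hd
    by_contra h
    exact Set.disjoint_left.1 (hdisj i j h) (subset_closure (mem_ball_self (hε.trans_le hi)))
      (subset_closure (mem_ball.2 (hd.trans_le hj)))
  let f := hinf.natEmbedding
  obtain ⟨y, φ, hφ, hlim⟩ := CompactSpace.tendsto_subseq (fun n => c (f n))
  have hC := hlim.cauchySeq
  obtain ⟨N, hN⟩ := Metric.cauchySeq_iff.1 hC ε hε
  have h1 := hN N le_rfl (N+1) (by omega)
  have h2 := hsep _ (f (φ N)).2 _ (f (φ (N+1))).2 h1
  have h3 := hφ.injective (f.injective (Subtype.ext h2))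
  omega


lemma jordan {c : ℕ → Sph} {r : ℕ → ℝ} (hr : ∀ i, 0 < r i)
    (hdisj : ∀ i j, i ≠ j → Disjoint (closure (ball (c i) (r i))) (closure (ball (c j) (r j))))
    {p : Sph} (hp : ∀ i, p ∉ closure (ball (c i) (r i))) {N : Set Sph} (hN : N ∈ nhds p) :
    ∃ W : Set Sph, IsOpen W ∧ p ∈ W ∧ W ⊆ N ∧ (∀ y ∈ frontier W, ∀ i, y ∉ ball (c i) (r i)) ∧
      ∃ (π : Sph → ℂ) (ρ : ℝ), 0 < ρ ∧ ContinuousOn π (frontier W) ∧ InjOn π (frontier W) ∧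
        MapsTo π (frontier W) (sphere 0 ρ) := by
  obtain ⟨Φ, hΦ0, hΦ, hconv⟩ := chart p
  have hΦc : Continuous Φ := hΦ.continuous
  have hN' : Φ ⁻¹' N ∈ nhds (0:ℂ) := hΦc.continuousAt.preimage_mem_nhds (by rwa [hΦ0])
  obtain ⟨η, hη, hηN⟩ := Metric.nhds_basis_ball.mem_iff.1 hN'
  have hopen : Φ '' ball 0 η ∈ nhds p :=
    (hΦ.isOpenMap _ isOpen_ball).mem_nhds ⟨0, mem_ball_self hη, hΦ0⟩
  obtain ⟨δ', hδ', hδη⟩ := Metric.nhds_basis_ball.mem_iff.1 hopen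
  set δ := min 1 (δ' / 2) with hδdef
  have hδ : 0 < δ := by positivity
  have hδ1 : δ ≤ 1 := min_le_left _ _
  have hδ2 : 2 * δ ≤ δ' := by have := min_le_right 1 (δ' / 2); linarith
  have hF := finite_large hdisj (ε := δ / 2) (by positivity)
  have hev : ∀ᶠ y in nhds p, ∀ i ∈ {i | δ / 2 ≤ r i}, y ∉ closure (ball (c i) (r i)) := by
    rw [Filter.eventually_all_finite hF]
    intro i _
    exact isClosed_closure.isOpen_compl.mem_nhds (hp i)
  have hev2 : ∀ᶠ z in nhds (0:ℂ), (∀ i ∈ {i | δ / 2 ≤ r i}, Φ z ∉ closure (ball (c i) (r i))) ∧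
      dist (Φ z) p < δ ∧ z ∈ ball (0:ℂ) η := by
    have ht : Filter.Tendsto Φ (nhds 0) (nhds p) := by
      have := hΦc.tendsto 0; rwa [hΦ0] at this
    exact (ht.eventually hev).and ((ht.eventually (ball_mem_nhds p hδ)).and (ball_mem_nhds 0 hη))
  obtain ⟨ρ, hρ, hρs⟩ := Metric.nhds_basis_closedBall.mem_iff.1 hev2
  set V : ℕ → Set ℂ := fun i => Φ ⁻¹' ball (c i) (r i) with hV
  have hsmall : ∀ i, (V i ∩ closedBall 0 ρ).Nonempty → r i < δ / 2 := by
    rintro i ⟨z, hz, hzb⟩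
    by_contra h
    exact (hρs hzb).1 i (not_lt.1 h) (subset_closure hz)
  have hin : ∀ i, (V i ∩ closedBall 0 ρ).Nonempty → V i ⊆ ball 0 η := by
    intro i hi z hz
    have h1 := hsmall i hi
    obtain ⟨w, hw, hwb⟩ := hi
    have h2 := (hρs hwb).2.1
    have h3 : dist (Φ z) (c i) < r i := hz
    have h4 : dist (Φ w) (c i) < r i := hw
    have h5 : dist (Φ z) p < δ' := by
      have := dist_triangle4 (Φ z) (c i) (Φ w) p
      rw [dist_comm (c i)] at this
      linarith
    obtain ⟨z', hz', he⟩ := hδη h5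
    rwa [← hΦ.injective he]
  set e := hΦ.toOpenPartialHomeomorph Φ with he
  have hes : ∀ z, e.symm (Φ z) = z := fun z => by
    have := e.left_inv (x := z) (by simp [he])
    simpa [he] using this
  have hec : ContinuousOn e.symm (range Φ) := by
    have := e.continuousOn_symm
    simpa [he] using this
  set W' : Set ℂ := ball 0 ρ ∪ ⋃ i ∈ {i | (V i ∩ sphere 0 ρ).Nonempty}, V i with hW'
  have hVo : ∀ i, IsOpen (V i) := fun i => isOpen_ball.preimage hΦc
  have hcomp : IsCompact (Φ '' closedBall 0 η) := (isCompact_closedBall _ _).image hΦc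
  obtain ⟨hfrV, π, hπc, hπi, hπm⟩ := planar (V := V) hρ hVo
    (by
      intro i j hij
      refine Set.disjoint_left.2 fun z hz hz' => ?_
      exact Set.disjoint_left.1 (hdisj i j hij) (hΦc.closure_preimage_subset _ hz)
        (hΦc.closure_preimage_subset _ hz'))
    (by
      intro i hi
      exact hconv _ _ (hr i) (by have := hsmall i hi; linarith))
    (by
      intro ε hε
      have huc := hcomp.uniformContinuousOn_of_continuous (hec.mono (image_subset_range _ _))
      obtain ⟨d, hd, hdd⟩ := Metric.uniformContinuousOn_iff.1 huc ε hε
      refine (finite_large hdisj (ε := d / 2) (by positivity)).subset ?_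
      rintro i ⟨hi, x, hx, y, hy, hxy⟩
      by_contra hlt
      have hlt' : r i < d / 2 := not_le.1 hlt
      have hx' := ball_subset_closedBall (hin i hi hx)
      have hy' := ball_subset_closedBall (hin i hi hy)
      have h3 : dist (Φ x) (c i) < r i := hx
      have h4 : dist (Φ y) (c i) < r i := hy
      have h5 := hdd (Φ x) ⟨x, hx', rfl⟩ (Φ y) ⟨y, hy', rfl⟩ (by
        have := dist_triangle_right (Φ x) (Φ y) (c i)
        linarith)
      rw [hes, hes] at h5
      linarith)
    hW'
  have hW'o : IsOpen W' := isOpen_ball.union (isOpen_biUnion fun i _ => hVo i)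
  have hW'η : W' ⊆ ball 0 η := by
    rintro z (hz | hz)
    · exact (hρs (ball_subset_closedBall hz)).2.2
    · simp only [mem_iUnion] at hz
      obtain ⟨i, hi, hzi⟩ := hz
      exact hin i (Set.Nonempty.mono (inter_subset_inter_right _ sphere_subset_closedBall) hi) hzi
  have hWo : IsOpen (Φ '' W') := hΦ.isOpenMap _ hW'o
  have hcl : closure (Φ '' W') ⊆ Φ '' closure W' := by
    have hc : IsCompact (closure W') := (isCompact_closedBall (0:ℂ) η).of_isClosed_subset
      isClosed_closure (closure_minimal (hW'η.trans ball_subset_closedBall) isClosed_closedBall)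
    exact closure_minimal (image_mono subset_closure) (hc.image hΦc).isClosed
  have hfr : frontier (Φ '' W') ⊆ Φ '' frontier W' := by
    rw [hWo.frontier_eq, hW'o.frontier_eq]
    rintro y ⟨h1, h2⟩
    obtain ⟨z, hz, rfl⟩ := hcl h1
    exact ⟨z, ⟨hz, fun h => h2 ⟨z, h, rfl⟩⟩, rfl⟩
  refine ⟨Φ '' W', hWo, ⟨0, Or.inl (mem_ball_self hρ), hΦ0⟩, ?_, ?_, fun y => π (e.symm y), ρ, hρ, ?_, ?_, ?_⟩
  · rintro _ ⟨z, hz, rfl⟩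
    exact hηN (hW'η hz)
  · intro y hy i
    obtain ⟨z, hz, rfl⟩ := hfr hy
    exact hfrV i z hz
  · refine hπc.comp (hec.mono (hfr.trans (image_subset_range _ _))) ?_
    intro y hy
    obtain ⟨z, hz, rfl⟩ := hfr hy
    rwa [hes]
  · intro y hy y' hy' h
    obtain ⟨z, hz, rfl⟩ := hfr hy
    obtain ⟨z', hz', rfl⟩ := hfr hy'
    simp only [hes] at h
    rw [hπi hz hz' h]
  · intro y hy
    obtain ⟨z, hz, rfl⟩ := hfr hy
    simp only [hes]
    exact hπm hz

lemma preconn_frontier {X : Type} [TopologicalSpace X] {S W : Set X} (hS : IsPreconnected S)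
    (hW : IsOpen W) (h1 : (S ∩ W).Nonempty) (h2 : (S ∩ Wᶜ).Nonempty) :
    (S ∩ frontier W).Nonempty := by
  by_contra hcon
  have hno : ∀ y ∈ S, y ∉ W → y ∉ closure W := by
    intro y hy hyW hyc
    exact hcon ⟨y, hy, by rw [hW.frontier_eq]; exact ⟨hyc, hyW⟩⟩
  obtain ⟨x, hx, hxW⟩ := h2
  obtain ⟨y, -, hy1, hy2⟩ := hS W (closure W)ᶜ hW isClosed_closure.isOpen_compl
    (fun y hy => (em (y ∈ W)).imp id (hno y hy)) h1 ⟨x, hx, hno x hx hxW⟩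
  exact hy2 (subset_closure hy1)

/-- **No branching at carpet points.**  Let `(Uᵢ)` be a countable family of nonempty open round
disks in `S²` with pairwise disjoint closures and dense union, and `I* = S² \ ⋃ᵢ Uᵢ`.  Then
there is no continuous map `g : T × [0,1] → S²` which is injective on `g⁻¹(I*)` and sends some
point `(o,s)`, `s ∈ (0,1)`, of the open spine outside `⋃ᵢ closure (Uᵢ)`. -/
theorem no_branching_at_carpet_points
    (U : ℕ → Set Sph) (c : ℕ → Sph) (r : ℕ → ℝ)
    (hr : ∀ i, 0 < r i) (hball : ∀ i, U i = Metric.ball (c i) (r i))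
    (hne : ∀ i, (U i).Nonempty)
    (hdisj : Pairwise fun i j => Disjoint (closure (U i)) (closure (U j)))
    (hdense : Dense (⋃ i, U i)) :
    ¬ ∃ g : (ℝ × ℝ) × ℝ → Sph,
        ContinuousOn g (tripod ×ˢ Icc (0 : ℝ) 1) ∧
        InjOn g ((tripod ×ˢ Icc (0 : ℝ) 1) ∩ g ⁻¹' (⋃ i, U i)ᶜ) ∧
        ∃ s ∈ Ioo (0 : ℝ) 1, g ((0 : ℝ × ℝ), s) ∉ ⋃ i, closure (U i) := by
  rintro ⟨g, hg, hinj, s, hs, hgs⟩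
  obtain rfl : U = fun i => Metric.ball (c i) (r i) := funext hball
  have hd : ∀ i j, i ≠ j → Disjoint (closure (ball (c i) (r i))) (closure (ball (c j) (r j))) :=
    fun i j hij => hdisj hij
  have hp : ∀ i, g (0, s) ∉ closure (ball (c i) (r i)) := by
    intro i hi
    exact hgs (mem_iUnion.2 ⟨i, hi⟩)
  have hq : 0 < Real.sqrt 3 := Real.sqrt_pos.2 (by norm_num)
  -- the two-page disk
  let cl : ℝ → ℝ := fun t => max (-1) (min 1 t)
  let γ : ℝ → ℝ × ℝ := fun t => (max t 0 - max (-t) 0 / 2, Real.sqrt 3 / 2 * max (-t) 0)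
  have hγT : ∀ t, -1 ≤ t → t ≤ 1 → γ t ∈ tripod := by
    intro t h1 h2
    rcases le_total 0 t with h | h
    · refine Or.inl (Or.inl ⟨1 - t, t, by linarith, h, by ring, ?_⟩)
      have h3 : max (-t) 0 = 0 := max_eq_right (by linarith)
      ext <;> simp [γ, h3, max_eq_left h]
    · refine Or.inl (Or.inr ⟨1 + t, -t, by linarith, by linarith, by ring, ?_⟩)
      have h3 : max (-t) 0 = -t := max_eq_left (by linarith)
      ext
      · simp [γ, h3, max_eq_right h]; ring
      · simp [γ, h3]; ring
  have hγi : ∀ t t', γ t = γ t' → t = t' := by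
    intro t t' h
    have h1 := congrArg Prod.fst h
    have h2 := congrArg Prod.snd h
    simp only [γ] at h1 h2
    have h3 : max (-t) 0 = max (-t') 0 := mul_left_cancel₀ (by positivity) h2
    rw [h3] at h1
    have h4 : max t 0 = max t' 0 := by linarith
    have h5 : ∀ x : ℝ, x = max x 0 - max (-x) 0 := by
      intro x
      rcases le_total 0 x with h | h
      · rw [max_eq_left h, max_eq_right (by linarith)]; ring
      · rw [max_eq_right h, max_eq_left (by linarith)]; ring
    rw [h5 t, h5 t', h3, h4]
  let f : ℂ → (ℝ × ℝ) × ℝ := fun z => (γ (cl z.re), max 0 (min 1 (s + z.im)))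
  have hfc : Continuous f := by
    simp only [f, γ, cl]
    fun_prop
  have hfm : ∀ z, f z ∈ tripod ×ˢ Icc (0:ℝ) 1 := by
    intro z
    refine ⟨hγT _ (le_max_left _ _) (max_le (by norm_num) (min_le_left _ _)), le_max_left _ _,
      max_le zero_le_one (min_le_left _ _)⟩
  set R := min s (1 - s) with hRdef
  have hR : 0 < R := lt_min hs.1 (by linarith [hs.2])
  have hR1 : R ≤ s := min_le_left _ _
  have hR2 : R ≤ 1 - s := min_le_right _ _
  have hfB : ∀ z ∈ closedBall (0:ℂ) R, f z = (γ z.re, s + z.im) := by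
    intro z hz
    have hz' : ‖z‖ ≤ R := by simpa using hz
    have h1 := abs_le.1 ((Complex.abs_re_le_norm z).trans hz')
    have h2 := abs_le.1 ((Complex.abs_im_le_norm z).trans hz')
    have h3 : cl z.re = z.re := by
      simp only [cl]
      rw [min_eq_right (by linarith [hs.1]), max_eq_right (by linarith [hs.1, hs.2])]
    simp only [f, h3]
    rw [min_eq_right (by linarith [hs.1]), max_eq_right (by linarith [hs.1, hs.2])]
  have hfi : InjOn f (closedBall (0:ℂ) R) := by
    intro z hz w hw h
    rw [hfB z hz, hfB w hw] at h
    have h1 := hγi _ _ (congrArg Prod.fst h)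
    have h2 := congrArg Prod.snd h
    simp only at h2
    exact Complex.ext h1 (by linarith)
  have hf0 : f 0 = (0, s) := by
    rw [hfB 0 (mem_closedBall_self hR.le)]
    simp [γ]
  have hGc : Continuous fun z => g (f z) := hg.comp_continuous hfc hfm
  -- the third page
  let l : ℝ → (ℝ × ℝ) × ℝ := fun t => ((-(t / 2), -(t * (Real.sqrt 3 / 2))), s)
  have hlc : Continuous l := by
    simp only [l]
    fun_prop
  have hlm : ∀ t ∈ Icc (0:ℝ) 1, l t ∈ tripod ×ˢ Icc (0:ℝ) 1 := by
    intro t ht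
    refine ⟨Or.inr ⟨1 - t, t, by linarith [ht.2], ht.1, by ring, ?_⟩, hs.1.le, hs.2.le⟩
    ext <;> simp [l]
    ring
  have hl0 : l 0 = (0, s) := by simp [l]
  have hpI : g (0, s) ∈ (⋃ i, ball (c i) (r i))ᶜ := by
    intro h
    obtain ⟨i, hi⟩ := mem_iUnion.1 h
    exact hp i (subset_closure hi)
  have hpT : ((0 : ℝ × ℝ), s) ∈ tripod ×ˢ Icc (0:ℝ) 1 := hf0 ▸ hfm 0
  have huniq : ∀ x ∈ tripod ×ˢ Icc (0:ℝ) 1, g x = g (0, s) → x = (0, s) := by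
    intro x hx h
    refine hinj ⟨hx, ?_⟩ ⟨hpT, hpI⟩ h
    simp only [mem_preimage]
    rw [h]; exact hpI
  have hN : ((fun z => g (f z)) '' sphere (0:ℂ) R ∪ {g (l 1)})ᶜ ∈ nhds (g (0, s)) := by
    apply IsOpen.mem_nhds
    · rw [isOpen_compl_iff]
      exact ((isCompact_sphere (0:ℂ) R).image hGc).isClosed.union isClosed_singleton
    · rintro (⟨z, hz, h⟩ | h)
      · have h1 := huniq _ (hfm z) h
        rw [← hf0] at h1
        have h2 := hfi (sphere_subset_closedBall hz) (mem_closedBall_self hR.le) h1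
        rw [h2] at hz
        simp at hz
        linarith
      · have h1 := huniq _ (hlm 1 ⟨zero_le_one, le_rfl⟩) (by rw [mem_singleton_iff] at h; exact h.symm)
        have h2 := congrArg (fun x => x.1.1) h1
        simp [l] at h2
  obtain ⟨W, hWo, hpW, hWN, hWI, π, ρ, hρ, hπc, hπi, hπm⟩ := jordan hr hd hp hN
  have hWI' : ∀ x, g x ∈ frontier W → x ∈ g ⁻¹' (⋃ i, ball (c i) (r i))ᶜ := by
    intro x hx h
    obtain ⟨i, hi⟩ := mem_iUnion.1 h
    exact hWI _ hx i hi
  have hcov := covers hR hGc hWo (by simp only [hf0]; exact hpW)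
    (fun z hz h => hWN h (Or.inl ⟨z, hz, rfl⟩))
    (by
      intro z hz w hw h
      exact hfi hz.1 hw.1 (hinj ⟨hfm z, hWI' _ hz.2⟩ ⟨hfm w, hWI' _ hw.2⟩ h))
    hπc hπi hρ hπm
  have hpre : IsPreconnected ((fun t => g (l t)) '' Icc (0:ℝ) 1) :=
    isPreconnected_Icc.image _ (hg.comp hlc.continuousOn hlm)
  obtain ⟨y, ⟨t, ht, rfl⟩, hy⟩ := preconn_frontier hpre hWo
    ⟨g (l 0), ⟨0, ⟨le_rfl, zero_le_one⟩, rfl⟩, by rw [hl0]; exact hpW⟩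
    ⟨g (l 1), ⟨1, ⟨zero_le_one, le_rfl⟩, rfl⟩, fun h => hWN h (Or.inr rfl)⟩
  obtain ⟨z, hz, hzt⟩ := hcov hy
  have hlz : f z = l t := by
    refine hinj ⟨hfm z, hWI' _ ?_⟩ ⟨hlm t ht, hWI' _ hy⟩ hzt
    simp only at hzt
    rw [hzt]; exact hy
  rw [hfB z hz] at hlz
  have h2 := congrArg (fun x => x.1.2) hlz
  simp only [γ, l] at h2
  have h3 : 0 ≤ Real.sqrt 3 / 2 * max (-z.re) 0 := by positivity
  have h4 : t = 0 := by
    have := ht.1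
    nlinarith
  rw [h4] at hy
  simp only [hl0] at hy
  rw [hWo.frontier_eq] at hy
  exact hy.2 hpW
end
end
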